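/- arXiv:2207.00825 — 4 statements merged into one kernel-verified Lean document; each statement's English description precedes it below -/
import Mathlib

section
/- Suppose the discriminant satisfies Δᵤ ≠ 1, and let p be the least prime divisor of Δᵤ. Then for every real x ≥ 1, x/p ≤ max{g_u(n) : n a positive integer, n ≤ x} ≤ x; in particular max{g_u(n) : n ≤ x} ≫ x. -/
/-!
Modulo a prime `p ∣ Δᵤ` the characteristic polynomial has a double root `c`, so `uₙ ≡ n cⁿ⁻¹` and
`p ∣ uₚ`. Expanding `u` along multiples of `n` gives `uₙₖ ≡ k uₙ uₙ₊₁ᵏ⁻¹` modulo `uₙ²`, which lets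
prime factors be adjoined to `n` one at a time: `n ∣ uₙ` as soon as every prime factor of `n`
divides `Δᵤ`. In particular `g_u` fixes all powers of a divisor `d > 1` of `Δᵤ`, and `[1, x]`
contains a power of `d` exceeding `x / d`.
-/

open scoped BigOperators

/-- `gu u n = gcd(n, u n)`. -/
noncomputable def gu (u : ℕ → ℤ) (n : ℕ) : ℕ := Int.gcd (n : ℤ) (u n)

/-- Rank of appearance of `m` in the sequence `u`. -/
noncomputable def zu (u : ℕ → ℤ) (m : ℕ) : ℕ := sInf {n : ℕ | 0 < n ∧ (m : ℤ) ∣ u n}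

/-- `ℓ(m) = lcm(m, z_u(m))`. -/
noncomputable def ellu (u : ℕ → ℤ) (m : ℕ) : ℕ := Nat.lcm m (zu u m)

/-- The arithmetic function `ρ_λ`. -/
noncomputable def rho (lam n : ℕ) : ℝ :=
  (Nat.factorial lam : ℝ) *
    ∑ f ∈ (Fintype.piFinset fun _ : n.primeFactors => Finset.range (lam + 1)) |>.filter
        (fun f => ∑ p, f p = lam),
      ∏ p : n.primeFactors,
        (((n.factorization (p : ℕ) : ℝ) ^ f p - ((n.factorization (p : ℕ) : ℝ) - 1) ^ f p) *
          Real.log ((p : ℕ) : ℝ) ^ f p / (Nat.factorial (f p) : ℝ))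

/-- The set of primes `≤ x`. -/
noncomputable def primesUpTo (x : ℝ) : Finset ℕ :=
  (Finset.range (⌊x⌋₊ + 1)).filter Nat.Prime

/-- `π(x)`, the number of primes `≤ x`. -/
noncomputable def primePi (x : ℝ) : ℕ := (primesUpTo x).card

/-- `π(x; b, a)`, the number of primes `p ≤ x` with `p ≡ a (mod b)`. -/
noncomputable def primePiMod (x : ℝ) (b a : ℕ) : ℕ :=
  ((primesUpTo x).filter fun p => p % b = a % b).card

/-- `Δ(x; b, a) = π(x; b, a) - π(x)/φ(b)`. -/
noncomputable def chebErr (x : ℝ) (b a : ℕ) : ℝ :=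
  (primePiMod x b a : ℝ) - (primePi x : ℝ) / (Nat.totient b : ℝ)

theorem exists_double_root_of_discrim_eq_zero {K : Type*} [Field K] [PerfectField K] {a b : K}
    (h : a ^ 2 + 4 * b = 0) : ∃ c, a = 2 * c ∧ b = -c ^ 2 := by
  by_cases h2 : (2 : K) = 0
  · have : CharP K 2 := CharTwo.of_one_ne_zero_of_two_eq_zero one_ne_zero h2
    obtain ⟨c, hc⟩ := surjective_frobenius K 2 (-b)
    rw [frobenius_def] at hc
    have ha : a ^ 2 = 0 := by linear_combination h - 2 * b * h2
    refine ⟨c, ?_, by rw [hc, neg_neg]⟩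
    rw [pow_eq_zero_iff two_ne_zero |>.mp ha, h2, zero_mul]
  · obtain ⟨c, rfl⟩ : ∃ c, a = 2 * c := ⟨a / 2, by field_simp⟩
    have hb : 2 * (2 * b) = 2 * (2 * -c ^ 2) := by linear_combination h
    exact ⟨c, rfl, mul_left_cancel₀ h2 (mul_left_cancel₀ h2 hb)⟩

/-- `IsLucasSeq a b u` says that `u` is the Lucas sequence `u₀ = 0`, `u₁ = 1`,
`uₙ₊₂ = a uₙ₊₁ + b uₙ`. With this sign of `b` the discriminant is `a ^ 2 + 4 * b`. -/
structure IsLucasSeq {R : Type*} [CommRing R] (a b : R) (u : ℕ → R) : Prop where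
  zero : u 0 = 0
  one : u 1 = 1
  add_two (n : ℕ) : u (n + 2) = a * u (n + 1) + b * u n

namespace IsLucasSeq

section CommRing

variable {R : Type*} [CommRing R] {a b : R} {u : ℕ → R}

theorem map {S : Type*} [CommRing S] (hu : IsLucasSeq a b u) (f : R →+* S) :
    IsLucasSeq (f a) (f b) (f ∘ u) where
  zero := by simp [hu.zero]
  one := by simp [hu.one]
  add_two n := by simp [hu.add_two]

theorem apply_add_add_one (hu : IsLucasSeq a b u) (m n : ℕ) :
    u (m + n + 1) = u (m + 1) * u (n + 1) + b * u m * u n := by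
  induction n generalizing m with
  | zero => simp [hu.zero, hu.one]
  | succ n ih =>
    rw [show m + (n + 1) + 1 = m + 1 + n + 1 by ring, ih, hu.add_two m, hu.add_two n]
    ring

theorem apply_add (hu : IsLucasSeq a b u) (m n : ℕ) :
    u (m + n) = u m * u (n + 1) + u (m + 1) * u n - a * u m * u n := by
  cases n with
  | zero => simp [hu.zero, hu.one]
  | succ n =>
    rw [← add_assoc, hu.apply_add_add_one, hu.add_two n]
    ring

theorem apply_dvd_apply_mul (hu : IsLucasSeq a b u) (n k : ℕ) : u n ∣ u (n * k) := by
  induction k with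
  | zero => simp [hu.zero]
  | succ k ih =>
    obtain ⟨t, ht⟩ := ih
    rw [mul_add_one, hu.apply_add, ht]
    exact ⟨t * u (n + 1) + u (n * k + 1) - a * t * u n, by ring⟩

theorem apply_dvd_apply (hu : IsLucasSeq a b u) {m n : ℕ} (h : m ∣ n) : u m ∣ u n := by
  obtain ⟨k, rfl⟩ := h
  exact hu.apply_dvd_apply_mul m k

theorem apply_dvd_apply_mul_add_one_sub (hu : IsLucasSeq a b u) (n k : ℕ) :
    u n ∣ u (n * k + 1) - u (n + 1) ^ k := by
  induction k with
  | zero => simp [hu.one]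
  | succ k ih =>
    obtain ⟨t, ht⟩ := ih
    rw [mul_add_one, hu.apply_add_add_one, eq_add_of_sub_eq ht]
    exact ⟨t * u (n + 1) + b * u (n * k), by ring⟩

theorem sq_apply_dvd_apply_mul_succ_sub (hu : IsLucasSeq a b u) (n k : ℕ) :
    u n ^ 2 ∣ u (n * (k + 1)) - (k + 1) * u n * u (n + 1) ^ k := by
  induction k with
  | zero => simp
  | succ k ih =>
    obtain ⟨r, hr⟩ := hu.apply_dvd_apply_mul n (k + 1)
    obtain ⟨s, hs⟩ := hu.apply_dvd_apply_mul_add_one_sub n (k + 1)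
    obtain ⟨t, ht⟩ := ih
    have hadd : u (n * (k + 1 + 1)) =
        u (n * (k + 1)) * u (n + 1) + u (n * (k + 1) + 1) * u n
          - a * u (n * (k + 1)) * u n := by
      rw [mul_add_one n (k + 1), hu.apply_add]
    refine ⟨t * u (n + 1) + s - a * r, ?_⟩
    push_cast
    linear_combination hadd + u (n + 1) * ht + u n * hs - a * u n * hr

theorem natCast_mul_apply_dvd_apply_mul (hu : IsLucasSeq a b u) {n k : ℕ} (h : (k : R) ∣ u n) :
    k * u n ∣ u (n * k) := by
  cases k with
  | zero => simp [hu.zero]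
  | succ k =>
    have hsq : ((k + 1 : ℕ) : R) * u n ∣ u n ^ 2 := by
      rw [sq]
      exact mul_dvd_mul_right h (u n)
    have hlead : ((k + 1 : ℕ) : R) * u n ∣ (k + 1) * u n * u (n + 1) ^ k :=
      ⟨u (n + 1) ^ k, by push_cast; ring⟩
    exact (dvd_sub_left hlead).mp (hsq.trans (hu.sq_apply_dvd_apply_mul_succ_sub n k))

theorem apply_add_one_of_double_root {c : R} (hu : IsLucasSeq (2 * c) (-c ^ 2) u) (n : ℕ) :
    u (n + 1) = (n + 1) * c ^ n := by
  induction n using Nat.twoStepInduction with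
  | zero => simp [hu.one]
  | one =>
    rw [hu.add_two 0, zero_add, hu.zero, hu.one]
    push_cast
    ring
  | more n ih_n ih_succ =>
    rw [hu.add_two (n + 1), ih_n, ih_succ]
    push_cast
    ring

end CommRing

section Int

variable {a b : ℤ} {u : ℕ → ℤ}

theorem prime_dvd_apply_self (hu : IsLucasSeq a b u) {p : ℕ} (hp : p.Prime)
    (hpd : (p : ℤ) ∣ a ^ 2 + 4 * b) : (p : ℤ) ∣ u p := by
  have : Fact p.Prime := ⟨hp⟩
  have hdisc : (a : ZMod p) ^ 2 + 4 * (b : ZMod p) = 0 := by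
    exact_mod_cast (ZMod.intCast_zmod_eq_zero_iff_dvd _ p).mpr hpd
  obtain ⟨c, ha, hb⟩ := exists_double_root_of_discrim_eq_zero hdisc
  have hmod : IsLucasSeq (2 * c) (-c ^ 2) (Int.castRingHom (ZMod p) ∘ u) := by
    simpa only [eq_intCast, ha, hb] using hu.map (Int.castRingHom (ZMod p))
  have hval := hmod.apply_add_one_of_double_root (p - 1)
  rw [← Nat.cast_add_one, Nat.sub_add_cancel hp.one_le, CharP.cast_eq_zero, zero_mul] at hval
  exact (ZMod.intCast_zmod_eq_zero_iff_dvd _ p).mp hval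

theorem natCast_dvd_apply_self (hu : IsLucasSeq a b u) {n : ℕ}
    (hn : ∀ p : ℕ, p.Prime → p ∣ n → (p : ℤ) ∣ a ^ 2 + 4 * b) : (n : ℤ) ∣ u n := by
  induction n using induction_on_primes with
  | zero => simp [hu.zero]
  | one => simp
  | prime_mul p m hp ih =>
    have hm : (m : ℤ) ∣ u m := ih fun q hq hqm ↦ hn q hq (hqm.mul_left p)
    by_cases hpm : (p : ℤ) ∣ u m
    · rw [Nat.cast_mul, mul_comm p m]
      exact (mul_dvd_mul_left _ hm).trans (hu.natCast_mul_apply_dvd_apply_mul hpm)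
    · have hcop : IsCoprime (p : ℤ) m := by
        rw [Nat.isCoprime_iff_coprime, hp.coprime_iff_not_dvd]
        exact fun h ↦ hpm ((Int.natCast_dvd_natCast.mpr h).trans hm)
      have hpu : (p : ℤ) ∣ u p := hu.prime_dvd_apply_self hp (hn p hp (Dvd.intro m rfl))
      rw [Nat.cast_mul]
      exact hcop.mul_dvd (hpu.trans (hu.apply_dvd_apply (Dvd.intro m rfl)))
        (hm.trans (hu.apply_dvd_apply (Dvd.intro_left p rfl)))

theorem natCast_pow_dvd_apply_pow (hu : IsLucasSeq a b u) {d : ℕ}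
    (hd : (d : ℤ) ∣ a ^ 2 + 4 * b) (k : ℕ) : ((d ^ k : ℕ) : ℤ) ∣ u (d ^ k) :=
  hu.natCast_dvd_apply_self fun _ hp hpk ↦
    (Int.natCast_dvd_natCast.mpr (hp.dvd_of_dvd_pow hpk)).trans hd

end Int

end IsLucasSeq

theorem gu_dvd (u : ℕ → ℤ) (n : ℕ) : gu u n ∣ n :=
  Int.natCast_dvd_natCast.mp (Int.gcd_dvd_left _ _)

theorem gu_eq_self_of_dvd {u : ℕ → ℤ} {n : ℕ} (h : (n : ℤ) ∣ u n) : gu u n = n :=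
  Int.gcd_eq_natAbs_left h

theorem statement9_general {a₁ a₂ : ℤ} {u : ℕ → ℤ} (hu : IsLucasSeq a₁ a₂ u)
    {d : ℕ} (hd : 1 < d) (hdvd : (d : ℤ) ∣ a₁ ^ 2 + 4 * a₂) (x : ℝ) (hx : 1 ≤ x) :
    (∃ n : ℕ, 0 < n ∧ (n : ℝ) ≤ x ∧ x / (d : ℝ) ≤ (gu u n : ℝ)) ∧
      (∀ n : ℕ, 0 < n → (n : ℝ) ≤ x → (gu u n : ℝ) ≤ x) := by
  constructor
  · have hd' : (1 : ℝ) < d := by exact_mod_cast hd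
    obtain ⟨k, hle, hlt⟩ := exists_nat_pow_near hx hd'
    refine ⟨d ^ k, by positivity, by exact_mod_cast hle, ?_⟩
    rw [gu_eq_self_of_dvd (hu.natCast_pow_dvd_apply_pow hdvd k), Nat.cast_pow,
      div_le_iff₀ (by positivity), ← pow_succ]
    exact hlt.le
  · intro n hn hnx
    have hgn : gu u n ≤ n := Nat.le_of_dvd hn (gu_dvd u n)
    exact (Nat.cast_le.mpr hgn).trans hnx

/-- Suppose `Δᵤ ≠ 1` and let `p` be the least prime divisor of `Δᵤ`.
Then for every real `x ≥ 1`, `x/p ≤ max{g_u(n) : 1 ≤ n ≤ x} ≤ x`, expressed by saying that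
some `n ≤ x` achieves `g_u(n) ≥ x/p` while every `n ≤ x` satisfies `g_u(n) ≤ x`. -/
theorem statement9 (a₁ a₂ : ℤ) (hcop : IsCoprime a₁ a₂) (ha₂ : a₂ ≠ 0)
    (hΔ : a₁ ^ 2 + 4 * a₂ ≠ 0)
    (u : ℕ → ℤ) (hu0 : u 0 = 0) (hu1 : u 1 = 1)
    (hrec : ∀ n : ℕ, u (n + 2) = a₁ * u (n + 1) + a₂ * u n)
    (hnd : ∀ α β : ℂ, α ^ 2 = (a₁ : ℂ) * α + (a₂ : ℂ) →
      β ^ 2 = (a₁ : ℂ) * β + (a₂ : ℂ) → α ≠ β → ∀ k : ℕ, 0 < k → (α / β) ^ k ≠ 1)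
    (hΔ1 : a₁ ^ 2 + 4 * a₂ ≠ 1)
    (p : ℕ) (hp : p.Prime) (hpd : (p : ℤ) ∣ a₁ ^ 2 + 4 * a₂)
    (hpmin : ∀ r : ℕ, r.Prime → (r : ℤ) ∣ a₁ ^ 2 + 4 * a₂ → p ≤ r) :
    ∀ x : ℝ, 1 ≤ x →
      (∃ n : ℕ, 0 < n ∧ (n : ℝ) ≤ x ∧ x / (p : ℝ) ≤ (gu u n : ℝ)) ∧
      (∀ n : ℕ, 0 < n → (n : ℝ) ≤ x → (gu u n : ℝ) ≤ x) :=
  statement9_general ⟨hu0, hu1, hrec⟩ hp.one_lt hpd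
end

section
/- Assume Chowla's conjecture on least primes in arithmetic progressions: for every ε > 0 there exists a constant C_ε > 0 such that for all coprime positive integers a and d, the least prime p with p ≡ a (mod d) satisfies p ≤ C_ε·d^{1+ε}. Suppose the discriminant satisfies Δᵤ ≠ 1. Then for every ε > 0 there exist constants c > 0 and x₀ > 0 (depending on a₁, a₂, ε) such that for all x ≥ x₀, G(x) := max{g_u(p−1) : p ≤ x, p prime} satisfies G(x) ≥ c·x^{1−ε}. -/
open scoped BigOperators

/-!
Let `Δ = a² + 4b` and let `p` be a prime dividing `Δ`. Modulo `Δ` the characteristic polynomial has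
a double root, so that `2 ^ n * U (n + 1) ≡ (n + 1) * a ^ n`, whence `p ∣ U p`. The subsequence
`n ↦ U (p * n)` is `U p` times another Lucas sequence, whose discriminant `Δ * U p ^ 2` is again
divisible by `p`; iterating gives `p ^ k ∣ U (p ^ k)`, and hence `p ^ k ∣ gcd (n, U n)` as soon as
`p ^ k ∣ n`. Choosing `p ^ (k * L)` of the order of `x`, a prime `q ≡ 1 [MOD p ^ k]` of size
`O (p ^ (k * L))` lies below `x` and has `gcd (q - 1, U (q - 1)) ≥ p ^ k`, of the order of
`x ^ (1 / L)`.
-/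

section LucasSeq

variable {R : Type*} [CommRing R]

/-- The fundamental Lucas sequence `U` of `x² - a x - b`, with `U 0 = 0` and `U 1 = 1`. -/
def lucasSeq (a b : R) : ℕ → R
  | 0 => 0
  | 1 => 1
  | n + 2 => a * lucasSeq a b (n + 1) + b * lucasSeq a b n

/-- The companion Lucas sequence `V` of `x² - a x - b`, with `V 0 = 2` and `V 1 = a`: the sum of
the `n`-th powers of the two roots. It is expressed through `U` so that identities relating the two
sequences need no recurrence of its own. -/
def lucasCompanion (a b : R) (n : ℕ) : R :=
  2 * lucasSeq a b (n + 1) - a * lucasSeq a b n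

variable (a b : R)

@[simp] lemma lucasSeq_zero : lucasSeq a b 0 = 0 := rfl

@[simp] lemma lucasSeq_one : lucasSeq a b 1 = 1 := rfl

lemma lucasSeq_add_two (n : ℕ) :
    lucasSeq a b (n + 2) = a * lucasSeq a b (n + 1) + b * lucasSeq a b n := rfl

@[simp] lemma lucasSeq_two : lucasSeq a b 2 = a := by simp [lucasSeq_add_two]

variable {a b} in
lemma eq_mul_lucasSeq {u : ℕ → R} (hu₀ : u 0 = 0)
    (hrec : ∀ n, u (n + 2) = a * u (n + 1) + b * u n) (n : ℕ) :
    u n = u 1 * lucasSeq a b n := by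
  induction n using Nat.twoStepInduction with
  | zero => simp [hu₀]
  | one => simp
  | more n ih₀ ih₁ => rw [hrec, lucasSeq_add_two, ih₀, ih₁]; ring

lemma lucasSeq_add_add_one (m n : ℕ) :
    lucasSeq a b (m + n + 1) =
      lucasSeq a b (m + 1) * lucasSeq a b (n + 1) + b * lucasSeq a b m * lucasSeq a b n := by
  induction n using Nat.twoStepInduction with
  | zero => simp
  | one => simp [lucasSeq_add_two a b m, mul_comm]
  | more n ih₀ ih₁ =>
    rw [show m + (n + 2) + 1 = m + n + 1 + 2 by ring, lucasSeq_add_two,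
      show m + n + 1 + 1 = m + (n + 1) + 1 by ring, ih₀, ih₁,
      lucasSeq_add_two a b (n + 1), lucasSeq_add_two a b n]
    ring

lemma lucasSeq_cassini (n : ℕ) :
    lucasSeq a b (n + 1) ^ 2 - a * lucasSeq a b n * lucasSeq a b (n + 1)
      - b * lucasSeq a b n ^ 2 = (-b) ^ n := by
  induction n with
  | zero => simp
  | succ n ih => rw [pow_succ (-b), ← ih, lucasSeq_add_two]; ring

lemma lucasCompanion_sq_sub (n : ℕ) :
    lucasCompanion a b n ^ 2 - 4 * (-b) ^ n = (a ^ 2 + 4 * b) * lucasSeq a b n ^ 2 := by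
  rw [lucasCompanion, ← lucasSeq_cassini]; ring

lemma lucasSeq_two_mul (m : ℕ) :
    lucasSeq a b (2 * m) = lucasCompanion a b m * lucasSeq a b m := by
  cases m with
  | zero => simp
  | succ m =>
    rw [show 2 * (m + 1) = m + 1 + m + 1 by ring, lucasSeq_add_add_one, lucasCompanion,
      lucasSeq_add_two]
    ring

lemma lucasSeq_two_mul_add_one (m : ℕ) :
    lucasSeq a b (2 * m + 1) = lucasCompanion a b m * lucasSeq a b (m + 1) - (-b) ^ m := by
  rw [two_mul, lucasSeq_add_add_one, lucasCompanion, ← lucasSeq_cassini]; ring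

lemma lucasSeq_add_two_mul (n m : ℕ) :
    lucasSeq a b (n + 2 * m) =
      lucasCompanion a b m * lucasSeq a b (n + m) - (-b) ^ m * lucasSeq a b n := by
  induction n using Nat.twoStepInduction with
  | zero => simp [lucasSeq_two_mul]
  | one => simp [add_comm 1, lucasSeq_two_mul_add_one]
  | more n ih₀ ih₁ =>
    rw [add_right_comm n 2 (2 * m), add_right_comm n 2 m, lucasSeq_add_two a b (n + 2 * m),
      lucasSeq_add_two a b (n + m), lucasSeq_add_two a b n, ← add_right_comm n 1 (2 * m), ih₀, ih₁,
      add_right_comm n 1 m]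
    ring

lemma lucasSeq_mul (m n : ℕ) :
    lucasSeq a b (m * n) =
      lucasSeq a b m * lucasSeq (lucasCompanion a b m) (-(-b) ^ m) n := by
  have hrec (n : ℕ) : lucasSeq a b (m * (n + 2)) =
      lucasCompanion a b m * lucasSeq a b (m * (n + 1)) +
        -(-b) ^ m * lucasSeq a b (m * n) := by
    rw [mul_add, mul_comm m 2, lucasSeq_add_two_mul, mul_add_one]; ring
  simpa using eq_mul_lucasSeq (u := fun n ↦ lucasSeq a b (m * n)) (by simp) hrec n

variable {m n : ℕ} in
lemma lucasSeq_dvd_lucasSeq (h : m ∣ n) : lucasSeq a b m ∣ lucasSeq a b n := by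
  obtain ⟨n, rfl⟩ := h
  exact Dvd.intro _ (lucasSeq_mul a b m n).symm

lemma sq_add_four_mul_dvd_two_pow_mul_lucasSeq_sub (n : ℕ) :
    a ^ 2 + 4 * b ∣ 2 ^ n * lucasSeq a b (n + 1) - (n + 1) * a ^ n := by
  induction n using Nat.twoStepInduction with
  | zero => simp
  | one => simp [one_add_one_eq_two]
  | more n ih₀ ih₁ =>
    have hstep : 2 ^ (n + 2) * lucasSeq a b (n + 2 + 1) - ((n + 2 : ℕ) + 1) * a ^ (n + 2) =
        2 * a * (2 ^ (n + 1) * lucasSeq a b (n + 1 + 1) - ((n + 1 : ℕ) + 1) * a ^ (n + 1)) +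
        4 * b * (2 ^ n * lucasSeq a b (n + 1) - (n + 1) * a ^ n) +
        (n + 1) * a ^ n * (a ^ 2 + 4 * b) := by
      rw [show n + 2 + 1 = n + 1 + 2 by ring, lucasSeq_add_two]; push_cast; ring
    rw [hstep]
    exact dvd_add (dvd_add (ih₁.mul_left _) (ih₀.mul_left _)) (dvd_mul_left _ _)

end LucasSeq

section PrimeDivisor

variable {p : ℕ} {a b : ℤ}

lemma prime_dvd_lucasSeq (hp : p.Prime) (hpΔ : (p : ℤ) ∣ a ^ 2 + 4 * b) :
    (p : ℤ) ∣ lucasSeq a b p := by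
  rcases hp.eq_two_or_odd' with rfl | hodd
  · have ha_sq : (2 : ℤ) ∣ a ^ 2 :=
      (dvd_add_left (Dvd.intro (2 * b) (by ring))).mp hpΔ
    simpa using Int.prime_two.dvd_of_dvd_pow ha_sq
  · obtain ⟨n, rfl⟩ := Nat.exists_eq_add_one_of_ne_zero hp.ne_zero
    have hsub := hpΔ.trans (sq_add_four_mul_dvd_two_pow_mul_lucasSeq_sub a b n)
    have hmul : ((n + 1 : ℕ) : ℤ) ∣ 2 ^ n * lucasSeq a b (n + 1) :=
      (dvd_iff_dvd_of_dvd_sub hsub).mpr (by simp)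
    have hcop : IsCoprime ((n + 1 : ℕ) : ℤ) (2 ^ n) :=
      (Nat.isCoprime_iff_coprime.mpr (Nat.coprime_two_right.mpr hodd)).pow_right
    exact hcop.dvd_of_dvd_mul_left hmul

lemma prime_pow_dvd_lucasSeq (hp : p.Prime) (hpΔ : (p : ℤ) ∣ a ^ 2 + 4 * b) (k : ℕ) :
    (p : ℤ) ^ k ∣ lucasSeq a b (p ^ k) := by
  induction k generalizing a b with
  | zero => simp
  | succ k ih =>
    have hpΔ' : (p : ℤ) ∣ lucasCompanion a b p ^ 2 + 4 * -(-b) ^ p := by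
      rw [mul_neg, ← sub_eq_add_neg, lucasCompanion_sq_sub]
      exact hpΔ.mul_right _
    rw [pow_succ', pow_succ', lucasSeq_mul]
    exact mul_dvd_mul (prime_dvd_lucasSeq hp hpΔ) (ih hpΔ')

lemma prime_pow_dvd_gu {u : ℕ → ℤ} (hu₀ : u 0 = 0)
    (hrec : ∀ n, u (n + 2) = a * u (n + 1) + b * u n) (hp : p.Prime)
    (hpΔ : (p : ℤ) ∣ a ^ 2 + 4 * b) {k n : ℕ} (hn : p ^ k ∣ n) : p ^ k ∣ gu u n := by
  refine Int.dvd_gcd (mod_cast hn) ?_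
  rw [eq_mul_lucasSeq hu₀ hrec, Nat.cast_pow]
  exact ((prime_pow_dvd_lucasSeq hp hpΔ k).trans (lucasSeq_dvd_lucasSeq a b hn)).mul_left _

lemma sq_add_four_mul_ne_neg_one (a b : ℤ) : a ^ 2 + 4 * b ≠ -1 := by
  intro h
  have hsq : a ^ 2 % 4 = 3 := by omega
  rcases Int.even_or_odd a with ha | ha
  · have := Int.even_iff.mp (ha.pow_of_ne_zero two_ne_zero)
    omega
  · have := Int.sq_mod_four_eq_one_of_odd ha
    omega

lemma exists_prime_dvd_sq_add_four_mul (hΔ : a ^ 2 + 4 * b ≠ 1) :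
    ∃ p : ℕ, p.Prime ∧ (p : ℤ) ∣ a ^ 2 + 4 * b := by
  have hunit : (a ^ 2 + 4 * b).natAbs ≠ 1 := fun h ↦
    (Int.natAbs_eq_iff.mp h).elim hΔ (sq_add_four_mul_ne_neg_one a b)
  obtain ⟨p, hp, hpΔ⟩ := Nat.exists_prime_and_dvd hunit
  exact ⟨p, hp, Int.natCast_dvd.mpr hpΔ⟩

end PrimeDivisor

lemma gu_pos (u : ℕ → ℤ) {n : ℕ} (hn : n ≠ 0) : 0 < gu u n :=
  Int.gcd_pos_of_ne_zero_left _ (mod_cast hn)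

lemma exists_pow_rpow_le_and_lt {t L y : ℝ} (ht : 1 < t) (hL : 0 < L) (hy : 1 ≤ y) :
    ∃ k : ℕ, (t ^ k) ^ L ≤ y ∧ y < (t ^ (k + 1)) ^ L := by
  have ht₀ : 0 ≤ t := zero_le_one.trans ht.le
  simpa only [Real.rpow_pow_comm ht₀] using exists_nat_pow_near hy (Real.one_lt_rpow ht hL)

lemma rpow_le_rpow_inv_mul_of_le_mul_rpow {x C y L θ : ℝ} (hx : 1 ≤ x) (hC : 0 ≤ C) (hy : 0 ≤ y)
    (hL : 0 < L) (hθ : θ * L ≤ 1) (h : x ≤ C * y ^ L) : x ^ θ ≤ C ^ L⁻¹ * y :=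
  calc x ^ θ ≤ x ^ L⁻¹ :=
        Real.rpow_le_rpow_of_exponent_le hx (by rwa [← one_div, le_div_iff₀ hL])
    _ ≤ (C * y ^ L) ^ L⁻¹ := by gcongr
    _ = C ^ L⁻¹ * y := by
        rw [Real.mul_rpow hC (Real.rpow_nonneg hy L), Real.rpow_rpow_inv hy hL.ne']

theorem statement11_general {a b : ℤ} {u : ℕ → ℤ} (hu₀ : u 0 = 0)
    (hrec : ∀ n, u (n + 2) = a * u (n + 1) + b * u n)
    {p : ℕ} (hp : p.Prime) (hpΔ : (p : ℤ) ∣ a ^ 2 + 4 * b)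
    {C L θ : ℝ} (hC : 0 < C) (hL : 0 < L) (hθ : θ * L ≤ 1)
    (hprime : ∀ k : ℕ, ∃ q : ℕ,
      q.Prime ∧ q ≡ 1 [MOD p ^ k] ∧ (q : ℝ) ≤ C * ((p ^ k : ℕ) : ℝ) ^ L) :
    ∃ c x₀ : ℝ, 0 < c ∧ 0 < x₀ ∧ ∀ x : ℝ, x₀ ≤ x →
      ∃ q : ℕ, q.Prime ∧ (q : ℝ) ≤ x ∧ c * x ^ θ ≤ (gu u (q - 1) : ℝ) := by
  have hp₀ : (0 : ℝ) < p := mod_cast hp.pos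
  refine ⟨(C ^ L⁻¹ * p)⁻¹, max 1 C, by positivity, by positivity, fun x hx ↦ ?_⟩
  obtain ⟨hx₁, hxC⟩ := max_le_iff.mp hx
  obtain ⟨k, hk_le, hk_lt⟩ := exists_pow_rpow_le_and_lt (t := p) (mod_cast hp.one_lt) hL
    ((one_le_div hC).mpr hxC)
  obtain ⟨q, hq, hq_mod, hq_le⟩ := hprime k
  refine ⟨q, hq, ?_, ?_⟩
  · rw [le_div_iff₀' hC] at hk_le
    exact hq_le.trans (mod_cast hk_le)
  · have hpow_dvd : p ^ k ∣ gu u (q - 1) :=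
      prime_pow_dvd_gu hu₀ hrec hp hpΔ ((Nat.modEq_iff_dvd' hq.one_lt.le).mp hq_mod.symm)
    have hpow_le : (p : ℝ) ^ k ≤ gu u (q - 1) :=
      mod_cast Nat.le_of_dvd (gu_pos u (Nat.sub_ne_zero_of_lt hq.one_lt)) hpow_dvd
    have hx_le : x ^ θ ≤ C ^ L⁻¹ * p ^ (k + 1) :=
      rpow_le_rpow_inv_mul_of_le_mul_rpow hx₁ hC.le (by positivity) hL hθ
        ((div_lt_iff₀' hC).mp hk_lt).le
    rw [inv_mul_le_iff₀ (by positivity)]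
    calc x ^ θ ≤ C ^ L⁻¹ * p * p ^ k := by rwa [mul_assoc, ← pow_succ']
      _ ≤ C ^ L⁻¹ * p * gu u (q - 1) := by gcongr

/-- Assume Chowla's conjecture: for every `ε > 0` there is `C_ε > 0` such
that for all coprime positive integers `a, d` the least prime `p ≡ a (mod d)` satisfies
`p ≤ C_ε·d^{1+ε}`. If `Δᵤ ≠ 1`, then for every `ε > 0` there are `c, x₀ > 0` such that for all
`x ≥ x₀` some prime `p ≤ x` satisfies `g_u(p−1) ≥ c·x^{1−ε}`. -/
theorem statement11 (a₁ a₂ : ℤ) (hcop : IsCoprime a₁ a₂) (ha₂ : a₂ ≠ 0)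
    (hΔ : a₁ ^ 2 + 4 * a₂ ≠ 0)
    (u : ℕ → ℤ) (hu0 : u 0 = 0) (hu1 : u 1 = 1)
    (hrec : ∀ n : ℕ, u (n + 2) = a₁ * u (n + 1) + a₂ * u n)
    (hnd : ∀ α β : ℂ, α ^ 2 = (a₁ : ℂ) * α + (a₂ : ℂ) →
      β ^ 2 = (a₁ : ℂ) * β + (a₂ : ℂ) → α ≠ β → ∀ k : ℕ, 0 < k → (α / β) ^ k ≠ 1)
    (hChowla : ∀ ε : ℝ, 0 < ε → ∃ C : ℝ, 0 < C ∧
      ∀ a d : ℕ, 0 < a → 0 < d → Nat.Coprime a d →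
        ∃ q : ℕ, q.Prime ∧ q % d = a % d ∧ (q : ℝ) ≤ C * (d : ℝ) ^ (1 + ε))
    (hΔ1 : a₁ ^ 2 + 4 * a₂ ≠ 1) :
    ∀ ε : ℝ, 0 < ε → ∃ c x₀ : ℝ, 0 < c ∧ 0 < x₀ ∧ ∀ x : ℝ, x₀ ≤ x →
      ∃ q : ℕ, q.Prime ∧ (q : ℝ) ≤ x ∧ c * x ^ (1 - ε) ≤ (gu u (q - 1) : ℝ) := by
  intro ε hε
  obtain ⟨p, hp, hpΔ⟩ := exists_prime_dvd_sq_add_four_mul hΔ1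
  obtain ⟨C, hC, hprime⟩ := hChowla ε hε
  exact statement11_general hu0 hrec hp hpΔ hC (by linarith) (by nlinarith)
    fun k ↦ hprime 1 (p ^ k) one_pos (pow_pos hp.pos k) (Nat.coprime_one_left _)
end

section
/- For every positive integer λ and every real x > 0, Σ_{p ≤ x, p prime} (log g_u(p−1))^λ = Σ_{d ≤ x, gcd(d, a₂) = 1} ρ_λ(d)·π(x; ℓ(d), 1), where the right-hand sum is over positive integers d ≤ x coprime to a₂. -/
open scoped BigOperators

/-!
The function `ρ_λ` is the Dirichlet convolution `μ * log ^ λ`: indeed `n ^ T = exp (T log n)` is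
multiplicative in `n` with values in power series in `T`, so `μ * n ^ T` is the product of the
differences `q ^ (hT) - q ^ ((h - 1)T)` over the prime powers `q ^ h` exactly dividing `n`, and
`ρ_λ(n) / λ!` is the coefficient of `T ^ λ` in it. Hence `(log m) ^ λ = ∑_{d ∣ m} ρ_λ(d)`.

Consecutive terms of a Lucas sequence with coprime parameters are coprime, so by the addition
formula `d ∣ u m` makes `d ∣ u n` an `m`-periodic condition on `n`. Therefore `d ∣ u n` if and
only if `z_u(d) ∣ n`, and `d ∣ gcd (n, u n)` if and only if `ℓ(d) ∣ n`. Expanding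
`(log g_u(p - 1)) ^ λ` over the divisors of `g_u(p - 1)` and exchanging the sums over `p` and `d`
counts, for each `d`, the primes `p ≡ 1 (mod ℓ(d))`.
-/

section MoebiusConvolution

open ArithmeticFunction
open scoped ArithmeticFunction.Moebius ArithmeticFunction.zeta

lemma sum_divisors_moebius_mul {R : Type*} [Ring R] (f : ArithmeticFunction R) (n : ℕ) :
    ∑ d ∈ n.divisors, (μ * f : ArithmeticFunction R) d = f n := by
  rw [← coe_zeta_mul_apply, ← mul_assoc, coe_zeta_mul_coe_moebius, one_mul]

lemma moebius_mul_apply_prime_pow_succ {R : Type*} [Ring R] (f : ArithmeticFunction R)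
    {q : ℕ} (hq : q.Prime) (k : ℕ) :
    (μ * f : ArithmeticFunction R) (q ^ (k + 1)) = f (q ^ (k + 1)) - f (q ^ k) := by
  rw [← sum_divisors_moebius_mul f (q ^ (k + 1)), ← sum_divisors_moebius_mul f (q ^ k),
    Nat.sum_divisors_prime_pow hq, Nat.sum_divisors_prime_pow hq, Finset.sum_range_succ,
    add_sub_cancel_left]

lemma moebius_mul_apply_eq_prod {R : Type*} [CommRing R] {f : ArithmeticFunction R}
    (hf : f.IsMultiplicative) {n : ℕ} (hn : n ≠ 0) :
    (μ * f : ArithmeticFunction R) n = ∏ q ∈ n.primeFactors,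
      (f (q ^ n.factorization q) - f (q ^ (n.factorization q - 1))) := by
  rw [(isMultiplicative_moebius.intCast.mul hf).multiplicative_factorization _ hn,
    Nat.prod_factorization_eq_prod_primeFactors]
  refine Finset.prod_congr rfl fun q hq => ?_
  have hexp : n.factorization q ≠ 0 := Finsupp.mem_support_iff.1 hq
  obtain ⟨k, hk⟩ := Nat.exists_eq_succ_of_ne_zero hexp
  rw [hk, Nat.succ_eq_add_one,
    moebius_mul_apply_prime_pow_succ f (Nat.prime_of_mem_primeFactors hq), Nat.add_sub_cancel]

end MoebiusConvolution

section LogPowers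

open ArithmeticFunction PowerSeries
open scoped ArithmeticFunction.Moebius Nat

lemma coeff_prod_univ {R ι : Type*} [CommSemiring R] [Fintype ι] [DecidableEq ι]
    (F : ι → R⟦X⟧) (k : ℕ) :
    coeff k (∏ i, F i) =
      ∑ f ∈ (Fintype.piFinset fun _ : ι => Finset.range (k + 1)) with ∑ i, f i = k,
        ∏ i, coeff (f i) (F i) := by
  rw [PowerSeries.coeff_prod]
  refine Finset.sum_equiv Finsupp.equivFunOnFinite (fun f => ?_) fun _ _ => rfl
  simp only [Finset.mem_finsuppAntidiag, Finset.subset_univ, and_true, Finset.mem_filter,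
    Fintype.mem_piFinset, Finset.mem_range, Nat.lt_succ_iff, Finsupp.equivFunOnFinite_apply,
    iff_and_self]
  rintro rfl i
  exact Finset.single_le_sum (fun _ _ => Nat.zero_le _) (Finset.mem_univ i)

/-- The multiplicative function `n ↦ n ^ T = exp (T log n)` with values in the power series in `T`,
extended by `0` to `n = 0`. Up to factorials, its coefficients are the powers of `log n`. -/
noncomputable def powSeries : ArithmeticFunction ℝ⟦X⟧ :=
  ⟨fun n => if n = 0 then 0 else rescale (Real.log n) (exp ℝ), if_pos rfl⟩

lemma powSeries_apply {n : ℕ} (hn : n ≠ 0) : powSeries n = rescale (Real.log n) (exp ℝ) :=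
  if_neg hn

lemma isMultiplicative_powSeries : powSeries.IsMultiplicative := by
  refine IsMultiplicative.iff_ne_zero.2 ⟨by simp [powSeries_apply], fun {m n} hm hn _ => ?_⟩
  rw [powSeries_apply (mul_ne_zero hm hn), powSeries_apply hm, powSeries_apply hn,
    exp_mul_exp_eq_exp_add, Nat.cast_mul,
    Real.log_mul (Nat.cast_ne_zero.2 hm) (Nat.cast_ne_zero.2 hn)]

lemma coeff_powSeries (k : ℕ) {n : ℕ} (hn : n ≠ 0) :
    coeff k (powSeries n) = Real.log n ^ k / k ! := by
  simp [powSeries_apply hn, coeff_exp, div_eq_mul_inv]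

lemma coeff_powSeries_pow_sub (k : ℕ) {q h : ℕ} (hq : q ≠ 0) (hh : h ≠ 0) :
    coeff k (powSeries (q ^ h) - powSeries (q ^ (h - 1))) =
      ((h : ℝ) ^ k - ((h : ℝ) - 1) ^ k) * Real.log q ^ k / k ! := by
  rw [map_sub, coeff_powSeries k (pow_ne_zero _ hq), coeff_powSeries k (pow_ne_zero _ hq)]
  simp only [Nat.cast_pow, Real.log_pow, Nat.cast_pred (Nat.pos_of_ne_zero hh), mul_pow]
  ring

lemma rho_eq_factorial_mul_coeff (lam : ℕ) {n : ℕ} (hn : n ≠ 0) :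
    rho lam n = lam ! * coeff lam ((μ * powSeries : ArithmeticFunction ℝ⟦X⟧) n) := by
  rw [moebius_mul_apply_eq_prod isMultiplicative_powSeries hn, ← Finset.prod_coe_sort,
    coeff_prod_univ, rho]
  congr! 3 with f _ q
  have hexp : n.factorization q ≠ 0 := Finsupp.mem_support_iff.1 q.2
  exact (coeff_powSeries_pow_sub _ (Nat.prime_of_mem_primeFactors q.2).ne_zero hexp).symm

theorem sum_divisors_rho (lam : ℕ) {n : ℕ} (hn : n ≠ 0) :
    ∑ d ∈ n.divisors, rho lam d = Real.log n ^ lam := by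
  calc ∑ d ∈ n.divisors, rho lam d
      = lam ! * coeff lam (∑ d ∈ n.divisors, (μ * powSeries : ArithmeticFunction ℝ⟦X⟧) d) := by
        rw [map_sum, Finset.mul_sum]
        exact Finset.sum_congr rfl fun d hd =>
          rho_eq_factorial_mul_coeff lam (Nat.pos_of_mem_divisors hd).ne'
    _ = lam ! * (Real.log n ^ lam / lam !) := by
        rw [sum_divisors_moebius_mul, coeff_powSeries lam hn]
    _ = Real.log n ^ lam := mul_div_cancel₀ _ (Nat.cast_ne_zero.2 lam.factorial_ne_zero)

end LogPowers

-- If no positive `k` satisfies `P`, the infimum is `0`, which divides only `0`.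
lemma sInf_pos_dvd_iff {P : ℕ → Prop} (h0 : P 0) (hadd : ∀ m n, P m → (P (m + n) ↔ P n)) (n : ℕ) :
    sInf {k | 0 < k ∧ P k} ∣ n ↔ P n := by
  set z := sInf {k | 0 < k ∧ P k} with hz
  rcases Set.eq_empty_or_nonempty {k | 0 < k ∧ P k} with hempty | hne
  · rw [hz, hempty, Nat.sInf_empty, zero_dvd_iff]
    refine ⟨fun hn => hn ▸ h0, fun hPn => ?_⟩
    by_contra hn
    exact hempty.subset ⟨Nat.pos_of_ne_zero hn, hPn⟩
  · obtain ⟨hzpos, hPz⟩ : 0 < z ∧ P z := Nat.sInf_mem hne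
    have hperiodic : Function.Periodic P z := fun k => by
      rw [add_comm]
      exact propext (hadd z k hPz)
    rw [← hperiodic.map_mod_nat n, Nat.dvd_iff_mod_eq_zero]
    refine ⟨fun hmod => hmod ▸ h0, fun hPmod => ?_⟩
    by_contra hmod
    exact (Nat.mod_lt n hzpos).not_ge (Nat.sInf_le ⟨Nat.pos_of_ne_zero hmod, hPmod⟩)

lemma gu_ne_zero (u : ℕ → ℤ) {n : ℕ} (hn : n ≠ 0) : gu u n ≠ 0 :=
  fun h => hn (Int.natCast_eq_zero.1 (Int.gcd_eq_zero_iff.1 h).1)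

lemma gu_le (u : ℕ → ℤ) {n : ℕ} (hn : n ≠ 0) : gu u n ≤ n :=
  Nat.le_of_dvd (Nat.pos_of_ne_zero hn) (Int.natCast_dvd_natCast.1 (Int.gcd_dvd_left _ _))

/-- `u` is the Lucas sequence with parameters `a` and `b`: it starts with `0, 1` and satisfies
`u (n + 2) = a * u (n + 1) + b * u n`. -/
structure IsLucasSeq_s17 {R : Type*} [Semiring R] (a b : R) (u : ℕ → R) : Prop where
  zero : u 0 = 0
  one : u 1 = 1
  add_two : ∀ n, u (n + 2) = a * u (n + 1) + b * u n

namespace IsLucasSeq_s17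

lemma add_add_one {R : Type*} [CommSemiring R] {a b : R} {u : ℕ → R} (hu : IsLucasSeq_s17 a b u)
    (m n : ℕ) : u (m + n + 1) = u (m + 1) * u (n + 1) + b * u m * u n := by
  induction n using Nat.twoStepInduction with
  | zero => simp [hu.zero, hu.one]
  | one =>
    rw [hu.add_two m, hu.add_two 0, hu.zero, zero_add, hu.one]
    ring
  | more n ih ih' =>
    calc u (m + n + 1 + 2)
        = a * u (m + (n + 1) + 1) + b * u (m + n + 1) := hu.add_two _
      _ = u (m + 1) * (a * u (n + 2) + b * u (n + 1)) + b * u m * (a * u (n + 1) + b * u n) := by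
        rw [ih, ih']
        ring
      _ = u (m + 1) * u (n + 3) + b * u m * u (n + 2) := by
        rw [hu.add_two (n + 1), hu.add_two n]

section CommRing

variable {R : Type*} [CommRing R] {a b : R} {u : ℕ → R}

lemma isCoprime_succ_param (hu : IsLucasSeq_s17 a b u) (hab : IsCoprime a b) (n : ℕ) :
    IsCoprime (u (n + 1)) b := by
  induction n with
  | zero => simpa only [zero_add, hu.one] using isCoprime_one_left
  | succ n ih =>
    rw [hu.add_two]
    exact (hab.mul_left ih).add_mul_left_left (u n)

lemma isCoprime_succ (hu : IsLucasSeq_s17 a b u) (hab : IsCoprime a b) (n : ℕ) :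
    IsCoprime (u n) (u (n + 1)) := by
  induction n with
  | zero => simpa only [zero_add, hu.one] using isCoprime_one_right
  | succ n ih =>
    rw [hu.add_two, add_comm (a * _), mul_comm a]
    exact ((hu.isCoprime_succ_param hab n).mul_right ih.symm).add_mul_left_right a

lemma dvd_add_iff (hu : IsLucasSeq_s17 a b u) (hab : IsCoprime a b) {d : R} {m : ℕ} (hm : d ∣ u m)
    (n : ℕ) : d ∣ u (m + n) ↔ d ∣ u n := by
  cases n with
  | zero => simp only [add_zero, hm, hu.zero, dvd_zero]
  | succ n =>
    have hd : IsCoprime d (u (m + 1)) := (hu.isCoprime_succ hab m).of_isCoprime_of_dvd_left hm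
    rw [← add_assoc, hu.add_add_one, dvd_add_left ((hm.mul_left b).mul_right _)]
    exact ⟨hd.dvd_of_dvd_mul_left, fun h => h.mul_left _⟩

end CommRing

variable {a₁ a₂ : ℤ} {u : ℕ → ℤ}

theorem zu_dvd_iff (hu : IsLucasSeq_s17 a₁ a₂ u) (hcop : IsCoprime a₁ a₂) (d n : ℕ) :
    zu u d ∣ n ↔ (d : ℤ) ∣ u n :=
  sInf_pos_dvd_iff (P := fun n => (d : ℤ) ∣ u n) (hu.zero ▸ dvd_zero _)
    (fun _ n hm => hu.dvd_add_iff hcop hm n) n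

theorem ellu_dvd_iff (hu : IsLucasSeq_s17 a₁ a₂ u) (hcop : IsCoprime a₁ a₂) (d n : ℕ) :
    ellu u d ∣ n ↔ d ∣ gu u n := by
  rw [ellu, Nat.lcm_dvd_iff, hu.zu_dvd_iff hcop, gu, Int.dvd_gcd_iff, Int.natCast_dvd_natCast]

lemma isCoprime_of_dvd_gu (hu : IsLucasSeq_s17 a₁ a₂ u) (hcop : IsCoprime a₁ a₂) {d n : ℕ}
    (hn : n ≠ 0) (hd : d ∣ gu u n) : IsCoprime (d : ℤ) a₂ := by
  obtain ⟨k, rfl⟩ := Nat.exists_eq_succ_of_ne_zero hn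
  exact (hu.isCoprime_succ_param hcop k).of_isCoprime_of_dvd_left (Int.dvd_gcd_iff.1 hd).2

lemma filter_ellu_dvd_eq_divisors_gu (hu : IsLucasSeq_s17 a₁ a₂ u) (hcop : IsCoprime a₁ a₂)
    {n N : ℕ} (hn : n ≠ 0) (hnN : n ≤ N) :
    {d ∈ {d ∈ Finset.Icc 1 N | Int.gcd (d : ℤ) a₂ = 1} | ellu u d ∣ n} = (gu u n).divisors := by
  ext d
  simp only [Finset.mem_filter, Finset.mem_Icc, hu.ellu_dvd_iff hcop, Nat.mem_divisors]
  refine ⟨fun ⟨_, hd⟩ => ⟨hd, gu_ne_zero u hn⟩, fun ⟨hd, hg⟩ => ⟨⟨⟨?_, ?_⟩, ?_⟩, hd⟩⟩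
  · exact Nat.pos_of_dvd_of_pos hd (Nat.pos_of_ne_zero hg)
  · exact (Nat.le_of_dvd (Nat.pos_of_ne_zero hg) hd).trans ((gu_le u hn).trans hnN)
  · exact Int.isCoprime_iff_gcd_eq_one.1 (hu.isCoprime_of_dvd_gu hcop hn hd)

end IsLucasSeq_s17

lemma primePiMod_one_eq_card (x : ℝ) (b : ℕ) :
    primePiMod x b 1 = {p ∈ primesUpTo x | b ∣ p - 1}.card := by
  refine congrArg Finset.card (Finset.filter_congr fun p hp => ?_)
  rw [← Nat.modEq_iff_dvd' (Finset.mem_filter.1 hp).2.one_le]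
  exact eq_comm

lemma sum_mul_primePiMod_one {R : Type*} [NonAssocSemiring R] (s : Finset ℕ) (c : ℕ → R)
    (b : ℕ → ℕ) (x : ℝ) :
    ∑ d ∈ s, c d * (primePiMod x (b d) 1 : R) =
      ∑ p ∈ primesUpTo x, ∑ d ∈ s with b d ∣ p - 1, c d := by
  simp only [primePiMod_one_eq_card, Finset.card_filter, Nat.cast_sum, Finset.mul_sum, Nat.cast_ite,
    Nat.cast_one, Nat.cast_zero, mul_ite, mul_one, mul_zero, Finset.sum_filter]
  exact Finset.sum_comm

theorem statement17_general {a₁ a₂ : ℤ} (hcop : IsCoprime a₁ a₂) {u : ℕ → ℤ}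
    (hu : IsLucasSeq_s17 a₁ a₂ u) (lam : ℕ) (x : ℝ) :
    ∑ p ∈ primesUpTo x, Real.log (gu u (p - 1) : ℝ) ^ lam =
      ∑ d ∈ (Finset.Icc 1 ⌊x⌋₊).filter (fun d : ℕ => Int.gcd (d : ℤ) a₂ = 1),
        rho lam d * (primePiMod x (ellu u d) 1 : ℝ) := by
  rw [sum_mul_primePiMod_one]
  refine Finset.sum_congr rfl fun p hp => ?_
  obtain ⟨hpx, hprime⟩ := Finset.mem_filter.1 hp
  have hp0 : p - 1 ≠ 0 := (Nat.sub_pos_of_lt hprime.one_lt).ne'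
  have hle : p - 1 ≤ ⌊x⌋₊ := (Nat.sub_le p 1).trans (Nat.lt_succ_iff.1 (Finset.mem_range.1 hpx))
  rw [hu.filter_ellu_dvd_eq_divisors_gu hcop hp0 hle, sum_divisors_rho lam (gu_ne_zero u hp0)]

/-- For every positive integer `λ` and real `x > 0`,
`Σ_{p ≤ x} (log g_u(p−1))^λ = Σ_{d ≤ x, (d,a₂)=1} ρ_λ(d)·π(x; ℓ(d), 1)`. -/
theorem statement17 (a₁ a₂ : ℤ) (hcop : IsCoprime a₁ a₂) (ha₂ : a₂ ≠ 0)
    (hΔ : a₁ ^ 2 + 4 * a₂ ≠ 0)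
    (u : ℕ → ℤ) (hu0 : u 0 = 0) (hu1 : u 1 = 1)
    (hrec : ∀ n : ℕ, u (n + 2) = a₁ * u (n + 1) + a₂ * u n)
    (hnd : ∀ α β : ℂ, α ^ 2 = (a₁ : ℂ) * α + (a₂ : ℂ) →
      β ^ 2 = (a₁ : ℂ) * β + (a₂ : ℂ) → α ≠ β → ∀ k : ℕ, 0 < k → (α / β) ^ k ≠ 1)
    (lam : ℕ) (hlam : 0 < lam) (x : ℝ) (hx : 0 < x) :
    ∑ p ∈ primesUpTo x, Real.log (gu u (p - 1) : ℝ) ^ lam =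
      ∑ d ∈ (Finset.Icc 1 ⌊x⌋₊).filter (fun d : ℕ => Int.gcd (d : ℤ) a₂ = 1),
        rho lam d * (primePiMod x (ellu u d) 1 : ℝ) :=
  statement17_general hcop ⟨hu0, hu1, hrec⟩ lam x
end

section
/- For every ε ∈ (0, 1/2) there exists λ₀ = λ₀(a₁, a₂, ε) such that for all integers λ ≥ λ₀, M_{u,λ} := Σ_{n ≥ 1, gcd(n,a₂)=1} ρ_λ(n)/ℓ(n) ≥ (1/2 − ε)·λ·(λ−2)!. In particular, M_{u,λ} ≥ (1/2)·Σ_{p prime, p > |a₂|} (log p)^λ/p² for all positive integers λ. -/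
open scoped BigOperators

/-!
If `m` is coprime to `a₂` then `m ∣ u k` holds exactly when `zu u m ∣ k`, and a prime `p ∤ a₂`
satisfies `zu u p ≤ p + 1`. The primes alone therefore contribute at least
`∑ (log p) ^ λ / (p (p + 1))` to the moment. This sum is asymptotic to `(λ - 1)!`: up to
convergent corrections it is `∑ Λ(n) (log n) ^ (λ - 1) / n ^ 2`, up to sign a derivative at `2` of
minus the logarithmic derivative of `ζ`; the latter is `1 / (s - 1) + E` with `E` holomorphic near
the disc `|s - 2| ≤ 1`.

Comparing the two sums requires the series of the moment to converge. Let `p` be the largest prime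
factor of `n`. Since `zu u p ∣ zu u n`, one can write `n = p d m` with `d ∣ zu u p` and
`p m (zu u p) ≪ ellu u n`. Only `n` with at most `λ` prime factors matter, and for those `m` is a
square times a factor `≤ p ^ λ`; finally, few primes share a rank of appearance `k`, because they
all divide `u k`.
-/

/-- The Lucas sequence with parameters `a₁`, `a₂`. -/
structure IsLucasSeq_s18 (a₁ a₂ : ℤ) (u : ℕ → ℤ) : Prop where
  zero : u 0 = 0
  one : u 1 = 1
  add_two (n : ℕ) : u (n + 2) = a₁ * u (n + 1) + a₂ * u n

/-- The primes not dividing `a`. -/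
abbrev CoprimePrimes (a : ℤ) : Type := {p : ℕ // p.Prime ∧ IsCoprime (p : ℤ) a}

/-! ### Ranks of appearance -/

theorem zu_le {u : ℕ → ℤ} {m n : ℕ} (hn : 0 < n) (h : (m : ℤ) ∣ u n) : zu u m ≤ n :=
  Nat.sInf_le (s := {n : ℕ | 0 < n ∧ (m : ℤ) ∣ u n}) ⟨hn, h⟩

theorem zu_mem {u : ℕ → ℤ} {m : ℕ} (h : ∃ n, 0 < n ∧ (m : ℤ) ∣ u n) :
    0 < zu u m ∧ (m : ℤ) ∣ u (zu u m) :=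
  Nat.sInf_mem (s := {n : ℕ | 0 < n ∧ (m : ℤ) ∣ u n}) h

theorem two_pow_card_primeFactors_le {n : ℕ} (hn : n ≠ 0) : 2 ^ n.primeFactors.card ≤ n :=
  calc 2 ^ n.primeFactors.card ≤ ∏ p ∈ n.primeFactors, p :=
        Finset.pow_card_le_prod _ _ _ fun _ hp ↦ (Nat.prime_of_mem_primeFactors hp).two_le
    _ ≤ n := Nat.le_of_dvd (Nat.pos_of_ne_zero hn) (Nat.prod_primeFactors_dvd n)

theorem exists_roots_of_isAlgClosed (K : Type*) [Field K] [IsAlgClosed K] (a₁ a₂ : ℤ) :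
    ∃ α β : K, α ^ 2 = a₁ * α + a₂ ∧ β ^ 2 = a₁ * β + a₂ ∧
      (α - β) ^ 2 = ((a₁ ^ 2 + 4 * a₂ : ℤ) : K) := by
  open Polynomial in
  have hdeg : (X ^ 2 - C (a₁ : K) * X - C (a₂ : K)).degree = 2 := by compute_degree!
  obtain ⟨α, hα⟩ := IsAlgClosed.exists_root _ (hdeg.trans_ne two_ne_zero)
  have hα' : α ^ 2 = a₁ * α + a₂ := by
    simp only [Polynomial.IsRoot.def, Polynomial.eval_sub, Polynomial.eval_pow, Polynomial.eval_X,
      Polynomial.eval_mul, Polynomial.eval_C] at hα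
    linear_combination hα
  refine ⟨α, a₁ - α, hα', by linear_combination hα', ?_⟩
  push_cast
  linear_combination 4 * hα'

namespace IsLucasSeq_s18

variable {a₁ a₂ : ℤ} {u : ℕ → ℤ}

theorem dOcagne_identity (hu : IsLucasSeq_s18 a₁ a₂ u) (d n : ℕ) :
    u (n + d + 1) * u n - u (n + 1) * u (n + d) = -(-a₂) ^ n * u d := by
  induction n with
  | zero => simp [hu.zero, hu.one]
  | succ n ih =>
    rw [show n + 1 + d + 1 = n + d + 2 by ring, hu.add_two, hu.add_two n,
      show n + 1 + d = n + d + 1 by ring, pow_succ]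
    linear_combination (-a₂) * ih

theorem dvd_of_dvd_cross (hu : IsLucasSeq_s18 a₁ a₂ u) {m : ℤ} (hm : IsCoprime m a₂) {n d : ℕ}
    (h : m ∣ u (n + d + 1) * u n - u (n + 1) * u (n + d)) : m ∣ u d := by
  rw [hu.dOcagne_identity, neg_mul, dvd_neg] at h
  exact hm.neg_right.pow_right.dvd_of_dvd_mul_left h

theorem zu_dvd_of_dvd (hu : IsLucasSeq_s18 a₁ a₂ u) {m : ℕ} (hm : IsCoprime (m : ℤ) a₂) {k : ℕ}
    (h : (m : ℤ) ∣ u k) :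
    zu u m ∣ k := by
  induction k using Nat.strong_induction_on with
  | _ k ih =>
    rcases Nat.eq_zero_or_pos k with rfl | hk
    · exact dvd_zero _
    obtain ⟨hz, hmz⟩ := zu_mem ⟨k, hk, h⟩
    obtain ⟨j, rfl⟩ := Nat.exists_eq_add_of_le (zu_le hk h)
    have hj : (m : ℤ) ∣ u j :=
      hu.dvd_of_dvd_cross hm (dvd_sub (hmz.mul_left _) (h.mul_left _))
    exact dvd_add dvd_rfl (ih j (by omega) hj)

theorem exists_pos_dvd (hu : IsLucasSeq_s18 a₁ a₂ u) {m : ℕ} (hm₀ : m ≠ 0) (hm : IsCoprime (m : ℤ) a₂) :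
    ∃ n, 0 < n ∧ (m : ℤ) ∣ u n := by
  have : NeZero m := ⟨hm₀⟩
  obtain ⟨x, y, hxy, hf⟩ := Finite.exists_ne_map_eq_of_infinite
    fun n : ℕ ↦ ((u n : ZMod m), (u (n + 1) : ZMod m))
  wlog hlt : x < y generalizing x y
  · exact this y x hxy.symm hf.symm (by omega)
  obtain ⟨d, rfl⟩ := Nat.exists_eq_add_of_le hlt.le
  obtain ⟨h₀, h₁⟩ := Prod.mk.inj hf
  refine ⟨d, by omega, hu.dvd_of_dvd_cross hm (n := x) ?_⟩
  rw [← ZMod.intCast_zmod_eq_zero_iff_dvd]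
  push_cast
  rw [h₀, h₁, mul_comm, sub_self]

theorem zu_pos (hu : IsLucasSeq_s18 a₁ a₂ u) {m : ℕ} (hm₀ : m ≠ 0) (hm : IsCoprime (m : ℤ) a₂) :
    0 < zu u m :=
  (zu_mem (hu.exists_pos_dvd hm₀ hm)).1

theorem dvd_apply_zu (hu : IsLucasSeq_s18 a₁ a₂ u) {m : ℕ} (hm₀ : m ≠ 0) (hm : IsCoprime (m : ℤ) a₂) :
    (m : ℤ) ∣ u (zu u m) :=
  (zu_mem (hu.exists_pos_dvd hm₀ hm)).2

theorem zu_dvd_zu (hu : IsLucasSeq_s18 a₁ a₂ u) {m n : ℕ} (hn₀ : n ≠ 0) (hn : IsCoprime (n : ℤ) a₂)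
    (hmn : m ∣ n) :
    zu u m ∣ zu u n :=
  have hmn' : (m : ℤ) ∣ n := Int.natCast_dvd_natCast.mpr hmn
  hu.zu_dvd_of_dvd (hn.of_isCoprime_of_dvd_left hmn') (hmn'.trans (hu.dvd_apply_zu hn₀ hn))

/-- Pigeonhole: the `p + 1` ratios `u (n + 1) / u n` with `1 ≤ n ≤ p + 1` cannot be distinct
modulo `p`. -/
theorem zu_le_succ (hu : IsLucasSeq_s18 a₁ a₂ u) {p : ℕ} (hp : p.Prime) (hpa : IsCoprime (p : ℤ) a₂) :
    zu u p ≤ p + 1 := by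
  have : Fact p.Prime := ⟨hp⟩
  by_contra! hlt
  have hne : ∀ n ∈ Finset.Icc 1 (p + 1), (u n : ZMod p) ≠ 0 := fun n hn h ↦ by
    rw [Finset.mem_Icc] at hn
    exact absurd (zu_le hn.1 ((ZMod.intCast_zmod_eq_zero_iff_dvd _ _).mp h)) (by omega)
  obtain ⟨x, hx, y, hy, hxy, hf⟩ := Finset.exists_ne_map_eq_of_card_lt_of_maps_to
    (s := Finset.Icc 1 (p + 1)) (t := Finset.univ)
    (f := fun n ↦ (u (n + 1) : ZMod p) / (u n : ZMod p)) (by simp [ZMod.card])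
    fun n _ ↦ Finset.mem_coe.mpr (Finset.mem_univ _)
  wlog hxy' : x < y generalizing x y
  · exact this y hy x hx hxy.symm hf.symm (by omega)
  rw [div_eq_div_iff (hne x hx) (hne y hy)] at hf
  rw [Finset.mem_Icc] at hx hy
  obtain ⟨d, rfl⟩ := Nat.exists_eq_add_of_le hxy'.le
  have hd : (p : ℤ) ∣ u d := hu.dvd_of_dvd_cross hpa (n := x) <| by
    rw [← ZMod.intCast_zmod_eq_zero_iff_dvd]
    push_cast
    rw [hf, sub_self]
  exact absurd (zu_le (by omega) hd) (by omega)

theorem exists_natAbs_le_two_pow (hu : IsLucasSeq_s18 a₁ a₂ u) :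
    ∃ C : ℕ, ∀ n, (u n).natAbs ≤ 2 ^ (C * n) := by
  obtain ⟨C, hC⟩ : ∃ C : ℕ, a₁.natAbs + a₂.natAbs ≤ 2 ^ C := ⟨_, Nat.lt_two_pow_self.le⟩
  refine ⟨C, fun n ↦ ?_⟩
  induction n using Nat.twoStepInduction with
  | zero => simp [hu.zero]
  | one => simp [hu.one, Nat.one_le_two_pow]
  | more k ih₀ ih₁ =>
    have hmono : 2 ^ (C * k) ≤ 2 ^ (C * (k + 1)) := by gcongr <;> omega
    calc (u (k + 2)).natAbs
        ≤ a₁.natAbs * (u (k + 1)).natAbs + a₂.natAbs * (u k).natAbs := by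
          rw [hu.add_two, ← Int.natAbs_mul, ← Int.natAbs_mul]
          exact Int.natAbs_add_le _ _
      _ ≤ a₁.natAbs * 2 ^ (C * (k + 1)) + a₂.natAbs * 2 ^ (C * (k + 1)) := by
          gcongr
          exact ih₀.trans hmono
      _ ≤ 2 ^ C * 2 ^ (C * (k + 1)) := by rw [← add_mul]; gcongr
      _ = 2 ^ (C * (k + 2)) := by ring

theorem exists_card_zu_fiber_le (hu : IsLucasSeq_s18 a₁ a₂ u) (hne : ∀ k, 0 < k → u k ≠ 0) :
    ∃ C : ℕ, ∀ (s : Finset (CoprimePrimes a₂)) (k : ℕ), (∀ p ∈ s, zu u p = k) →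
      s.card ≤ C * k := by
  obtain ⟨C, hC⟩ := hu.exists_natAbs_le_two_pow
  refine ⟨C, fun s k hs ↦ ?_⟩
  rcases s.eq_empty_or_nonempty with rfl | ⟨q, hq⟩
  · simp
  have hk : (u k).natAbs ≠ 0 := by
    rw [← hs q hq]
    exact Int.natAbs_ne_zero.mpr (hne _ (hu.zu_pos q.2.1.ne_zero q.2.2))
  have hmaps : ∀ p ∈ s, (p : ℕ) ∈ (u k).natAbs.primeFactors := fun p hp ↦
    Nat.mem_primeFactors.mpr
      ⟨p.2.1, Int.natCast_dvd.mp (hs p hp ▸ hu.dvd_apply_zu p.2.1.ne_zero p.2.2), hk⟩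
  have hpow : 2 ^ (u k).natAbs.primeFactors.card ≤ 2 ^ (C * k) :=
    (two_pow_card_primeFactors_le hk).trans (hC k)
  exact (Finset.card_le_card_of_injOn _ hmaps Subtype.val_injective.injOn).trans
    ((Nat.pow_le_pow_iff_right one_lt_two).mp hpow)

theorem binet (hu : IsLucasSeq_s18 a₁ a₂ u) {K : Type*} [CommRing K] {α β : K}
    (hα : α ^ 2 = a₁ * α + a₂) (hβ : β ^ 2 = a₁ * β + a₂) (n : ℕ) :
    u n * (α - β) = α ^ n - β ^ n := by
  induction n using Nat.twoStepInduction with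
  | zero => simp [hu.zero]
  | one => simp [hu.one]
  | more k ih₀ ih₁ =>
    rw [hu.add_two]
    push_cast
    linear_combination a₁ * ih₁ + a₂ * ih₀ - α ^ k * hα + β ^ k * hβ

theorem ne_zero_of_nondegenerate (hu : IsLucasSeq_s18 a₁ a₂ u) (ha₂ : a₂ ≠ 0) (hΔ : a₁ ^ 2 + 4 * a₂ ≠ 0)
    (hnd : ∀ α β : ℂ, α ^ 2 = a₁ * α + a₂ → β ^ 2 = a₁ * β + a₂ → α ≠ β →
      ∀ k : ℕ, 0 < k → (α / β) ^ k ≠ 1) (k : ℕ) (hk : 0 < k) : u k ≠ 0 := by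
  intro huk
  obtain ⟨α, β, hα, hβ, hdisc⟩ := exists_roots_of_isAlgClosed ℂ a₁ a₂
  have hαβ : α ≠ β := by
    rintro rfl
    rw [sub_self, zero_pow two_ne_zero] at hdisc
    exact hΔ (Int.cast_eq_zero.mp hdisc.symm)
  have hβ₀ : β ≠ 0 := by
    rintro rfl
    exact ha₂ (Int.cast_eq_zero (α := ℂ).mp (by linear_combination -hβ))
  have hpow := hu.binet hα hβ k
  rw [huk, Int.cast_zero, zero_mul] at hpow
  refine hnd α β hα hβ hαβ k hk ?_
  rw [div_pow, div_eq_one_iff_eq (pow_ne_zero _ hβ₀)]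
  exact sub_eq_zero.mp hpow.symm

/-- In characteristic `p` Binet's formula reads `u p * (α - β) = (α - β) ^ p`. -/
theorem prime_dvd_discr (hu : IsLucasSeq_s18 a₁ a₂ u) {p : ℕ} (hp : p.Prime) (h : (p : ℤ) ∣ u p) :
    (p : ℤ) ∣ a₁ ^ 2 + 4 * a₂ := by
  have : Fact p.Prime := ⟨hp⟩
  let K := AlgebraicClosure (ZMod p)
  have : CharP K p := charP_of_injective_algebraMap (algebraMap (ZMod p) K).injective p
  obtain ⟨α, β, hα, hβ, hdisc⟩ := exists_roots_of_isAlgClosed K a₁ a₂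
  have hpow := hu.binet hα hβ p
  rw [(CharP.intCast_eq_zero_iff K p _).mpr h, zero_mul, ← sub_pow_char] at hpow
  rw [← CharP.intCast_eq_zero_iff K p, ← hdisc, eq_zero_of_pow_eq_zero hpow.symm,
    zero_pow two_ne_zero]

theorem gcd_zu_dvd_discr (hu : IsLucasSeq_s18 a₁ a₂ u) {p : ℕ} (hp : p.Prime)
    (hpa : IsCoprime (p : ℤ) a₂) :
    p.gcd (zu u p) ∣ (a₁ ^ 2 + 4 * a₂).natAbs := by
  rcases Nat.coprime_or_dvd_of_prime hp (zu u p) with hcop | hdvd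
  · rw [hcop.gcd_eq_one]
    exact one_dvd _
  have hzu : zu u p = p := by
    obtain ⟨c, hc⟩ := hdvd
    have hpos := hu.zu_pos hp.ne_zero hpa
    have hle := hu.zu_le_succ hp hpa
    have := hp.two_le
    obtain rfl : c = 1 := by nlinarith [Nat.pos_of_ne_zero (n := c) (by rintro rfl; omega)]
    rw [hc, mul_one]
  have hup := hu.dvd_apply_zu hp.ne_zero hpa
  rw [hzu] at hup ⊢
  rw [Nat.gcd_self]
  exact Int.natCast_dvd.mp (hu.prime_dvd_discr hp hup)

end IsLucasSeq_s18

/-! ### Size of `ρ_λ` -/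

theorem rho_eq_sum_multinomial (lam n : ℕ) :
    rho lam n = ∑ f ∈ (Finset.univ : Finset n.primeFactors).piAntidiag lam,
      (Nat.multinomial Finset.univ f : ℝ) * ∏ p : n.primeFactors,
        (((n.factorization p : ℝ) ^ f p - ((n.factorization p : ℝ) - 1) ^ f p) *
          Real.log (p : ℕ) ^ f p) := by
  have hindex : (Fintype.piFinset fun _ : n.primeFactors ↦ Finset.range (lam + 1)).filter
      (fun f ↦ ∑ p, f p = lam) = Finset.univ.piAntidiag lam := by
    ext f
    simp only [Finset.mem_filter, Fintype.mem_piFinset, Finset.mem_range, Order.lt_add_one_iff,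
      Finset.mem_piAntidiag, Finset.mem_univ, implies_true, and_true, and_iff_right_iff_imp]
    rintro rfl p
    exact Finset.single_le_sum (fun _ _ ↦ Nat.zero_le _) (Finset.mem_univ p)
  rw [rho, hindex, Finset.mul_sum]
  refine Finset.sum_congr rfl fun f hf ↦ ?_
  have hfact : ∏ p : n.primeFactors, ((f p).factorial : ℝ) ≠ 0 :=
    Finset.prod_ne_zero_iff.mpr fun p _ ↦ Nat.cast_ne_zero.mpr (f p).factorial_ne_zero
  rw [← (Finset.mem_piAntidiag.mp hf).1, ← Nat.multinomial_spec, Finset.prod_div_distrib]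
  push_cast
  field_simp

theorem rho_factor_mem_Icc {n p : ℕ} (hp : p ∈ n.primeFactors) (k : ℕ) :
    ((n.factorization p : ℝ) ^ k - ((n.factorization p : ℝ) - 1) ^ k) * Real.log p ^ k ∈
      Set.Icc 0 ((n.factorization p * Real.log p) ^ k) := by
  obtain ⟨hp, hpn, hn⟩ := Nat.mem_primeFactors.mp hp
  have hh : (1 : ℝ) ≤ n.factorization p :=
    Nat.one_le_cast.mpr (hp.factorization_pos_of_dvd hn hpn)
  have hlog : 0 ≤ Real.log p := Real.log_natCast_nonneg p
  have hmono : ((n.factorization p : ℝ) - 1) ^ k ≤ (n.factorization p : ℝ) ^ k :=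
    pow_le_pow_left₀ (by linarith) (by linarith) k
  have hnonneg : 0 ≤ ((n.factorization p : ℝ) - 1) ^ k := pow_nonneg (by linarith) k
  refine ⟨mul_nonneg (by linarith) (pow_nonneg hlog k), ?_⟩
  rw [mul_pow]
  exact mul_le_mul_of_nonneg_right (by linarith) (pow_nonneg hlog k)

theorem rho_nonneg (lam n : ℕ) : 0 ≤ rho lam n := by
  rw [rho_eq_sum_multinomial]
  exact Finset.sum_nonneg fun f _ ↦ mul_nonneg (Nat.cast_nonneg _) <|
    Finset.prod_nonneg fun p _ ↦ (rho_factor_mem_Icc p.2 (f p)).1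

/-- Dropping the terms `(hᵢ - 1) ^ λᵢ` leaves the multinomial expansion of
`(∑ i, hᵢ * log qᵢ) ^ λ`. -/
theorem rho_le_log_pow (lam n : ℕ) : rho lam n ≤ Real.log n ^ lam := by
  have hlog : Real.log n = ∑ p : n.primeFactors, (n.factorization p : ℝ) * Real.log (p : ℕ) := by
    rw [Real.log_nat_eq_sum_factorization, Finsupp.sum, Nat.support_factorization,
      ← Finset.sum_coe_sort]
  rw [rho_eq_sum_multinomial, hlog, Finset.sum_pow_eq_sum_piAntidiag]
  exact Finset.sum_le_sum fun f _ ↦ mul_le_mul_of_nonneg_left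
    (Finset.prod_le_prod (fun p _ ↦ (rho_factor_mem_Icc p.2 (f p)).1)
      fun p _ ↦ (rho_factor_mem_Icc p.2 (f p)).2) (Nat.cast_nonneg _)

theorem rho_eq_zero_of_lt_card_primeFactors {lam n : ℕ} (h : lam < n.primeFactors.card) :
    rho lam n = 0 := by
  rw [rho_eq_sum_multinomial]
  refine Finset.sum_eq_zero fun f hf ↦ mul_eq_zero_of_right _ ?_
  obtain ⟨p, hp⟩ : ∃ p, f p = 0 := by
    by_contra! hf₀
    have hcard : Fintype.card n.primeFactors ≤ ∑ p, f p :=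
      Fintype.card_eq_sum_ones.trans_le <|
        Finset.sum_le_sum fun p _ ↦ Nat.one_le_iff_ne_zero.mpr (hf₀ p)
    rw [(Finset.mem_piAntidiag.mp hf).1, Fintype.card_coe] at hcard
    omega
  exact Finset.prod_eq_zero (Finset.mem_univ p) (by simp [hp])

theorem rho_one {lam : ℕ} (hlam : 0 < lam) : rho lam 1 = 0 :=
  le_antisymm (by simpa [hlam.ne'] using rho_le_log_pow lam 1) (rho_nonneg lam 1)

theorem rho_prime {lam p : ℕ} (hlam : 0 < lam) (hp : p.Prime) :
    rho lam p = Real.log p ^ lam := by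
  have hval (q : p.primeFactors) : (q : ℕ) = p :=
    Finset.mem_singleton.mp (hp.primeFactors ▸ q.2)
  let : Unique p.primeFactors :=
    { default := ⟨p, by simp [hp.primeFactors]⟩, uniq := fun q ↦ Subtype.ext (hval q) }
  have hindex : (Finset.univ : Finset p.primeFactors).piAntidiag lam = {fun _ ↦ lam} := by
    ext f
    simp [Finset.mem_piAntidiag, funext_iff, Unique.forall_iff]
  rw [rho_eq_sum_multinomial, hindex, Finset.sum_singleton, Fintype.prod_unique, hval,
    hp.factorization_self]
  simp [hlam.ne', Nat.multinomial_singleton]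

/-! ### Summability of the moments -/

theorem summable_of_forall_exists_le {ι κ : Type*} {f : ι → ℝ} {g : κ → ℝ} (hf : 0 ≤ f)
    (hg : Summable g) (φ : κ → ι) (h : ∀ i, f i ≠ 0 → ∃ k, φ k = i ∧ f i ≤ g k) :
    Summable f := by
  choose ψ hφψ hle using h
  have hinj : Function.Injective fun i : Function.support f ↦ ψ i i.2 := fun i j hij ↦
    Subtype.ext ((hφψ i i.2).symm.trans ((congrArg φ hij).trans (hφψ j j.2)))
  rw [← Set.indicator_support (f := f), ← summable_subtype_iff_indicator]
  exact (hg.comp_injective hinj).of_nonneg_of_le (fun i ↦ hf i) fun i ↦ hle i i.2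

theorem summable_one_div_pow_three_of_card_fiber_le {ι : Type*} {z : ι → ℕ} {C : ℕ}
    (h : ∀ (s : Finset ι) (k : ℕ), (∀ i ∈ s, z i = k) → s.card ≤ C * k) :
    Summable fun i ↦ 1 / (z i : ℝ) ^ 3 := by
  classical
  have hsum : Summable fun k : ℕ ↦ C * (1 / (k : ℝ) ^ 2) :=
    (Real.summable_one_div_nat_pow.mpr one_lt_two).mul_left _
  refine summable_of_sum_le (fun i ↦ by positivity) (c := ∑' k : ℕ, C * (1 / (k : ℝ) ^ 2))
    fun t ↦ ?_
  rw [Finset.sum_comp (fun k : ℕ ↦ 1 / (k : ℝ) ^ 3) z]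
  refine (Finset.sum_le_sum fun k _ ↦ ?_).trans
    (hsum.sum_le_tsum (t.image z) fun k _ ↦ by positivity)
  have hcard : (({i ∈ t | z i = k}.card : ℕ) : ℝ) ≤ C * k := by
    exact_mod_cast h _ k fun i hi ↦ (Finset.mem_filter.mp hi).2
  rcases Nat.eq_zero_or_pos k with rfl | hk
  · simp
  calc {i ∈ t | z i = k}.card • (1 / (k : ℝ) ^ 3) ≤ (C * k) * (1 / (k : ℝ) ^ 3) := by
        rw [nsmul_eq_mul]
        gcongr
    _ = C * (1 / (k : ℝ) ^ 2) := by field_simp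

/-- One of `d` and `n / d` is at most `√n`. -/
theorem card_divisors_le_two_mul_sqrt (n : ℕ) : n.divisors.card ≤ 2 * n.sqrt := by
  have hsub : n.divisors ⊆ Finset.Icc 1 n.sqrt ∪ (Finset.Icc 1 n.sqrt).image (n / ·) := by
    intro d hd
    obtain ⟨⟨e, rfl⟩, hn⟩ := Nat.mem_divisors.mp hd
    obtain ⟨hd₀, he₀⟩ := mul_ne_zero_iff.mp hn
    simp only [Finset.mem_union, Finset.mem_image, Finset.mem_Icc, Nat.le_sqrt]
    rcases le_total d e with h | h
    · exact .inl ⟨by omega, by gcongr⟩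
    · exact .inr ⟨e, ⟨by omega, by gcongr⟩, Nat.mul_div_cancel _ (by omega)⟩
  have himage := Finset.card_image_le (s := Finset.Icc 1 n.sqrt) (f := (n / ·))
  have hcard := (Finset.card_le_card hsub).trans (Finset.card_union_le _ _)
  rw [Nat.card_Icc] at hcard himage
  omega

theorem log_pow_le_mul_rpow {δ x : ℝ} (hδ : 0 < δ) (hx : 1 ≤ x) (k : ℕ) :
    Real.log x ^ k ≤ k.factorial / δ ^ k * x ^ δ := by
  have hexp := Real.pow_div_factorial_le_exp (δ * Real.log x)
    (mul_nonneg hδ.le (Real.log_nonneg hx)) k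
  rw [div_le_iff₀ (by positivity), mul_pow, mul_comm δ, ← Real.rpow_def_of_pos (by linarith)]
    at hexp
  rw [div_mul_eq_mul_div, le_div_iff₀ (by positivity)]
  linarith

theorem exists_mul_sq_eq_of_primeFactors_le {m p k : ℕ} (hm : m ≠ 0) (hp : 0 < p)
    (hle : ∀ q ∈ m.primeFactors, q ≤ p) (hcard : m.primeFactors.card ≤ k) :
    ∃ a b, a * b ^ 2 = m ∧ a ≤ p ^ k := by
  obtain ⟨a, b, rfl, ha⟩ := Nat.sq_mul_squarefree m
  have hsub : a.primeFactors ⊆ (b ^ 2 * a).primeFactors :=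
    Nat.primeFactors_mono (dvd_mul_left _ _) hm
  refine ⟨a, b, mul_comm _ _, ?_⟩
  calc a = ∏ q ∈ a.primeFactors, q := (Nat.prod_primeFactors_of_squarefree ha).symm
    _ ≤ p ^ a.primeFactors.card := Finset.prod_le_pow_card _ _ _ fun q hq ↦ hle q (hsub hq)
    _ ≤ p ^ k := Nat.pow_le_pow_right hp ((Finset.card_le_card hsub).trans hcard)

/-- The `n`-th term of the series defining the moment `M_{u,λ}`. -/
noncomputable def momentTerm (a₂ : ℤ) (u : ℕ → ℤ) (lam n : ℕ) : ℝ :=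
  if 0 < n ∧ Int.gcd (n : ℤ) a₂ = 1 then rho lam n / (ellu u n : ℝ) else 0

theorem momentTerm_nonneg (a₂ : ℤ) (u : ℕ → ℤ) (lam n : ℕ) : 0 ≤ momentTerm a₂ u lam n := by
  rw [momentTerm]
  split_ifs
  · exact div_nonneg (rho_nonneg lam n) (Nat.cast_nonneg _)
  · exact le_rfl

theorem momentTerm_of_isCoprime {a₂ : ℤ} (u : ℕ → ℤ) (lam : ℕ) {n : ℕ} (hn : 0 < n)
    (hna : IsCoprime (n : ℤ) a₂) : momentTerm a₂ u lam n = rho lam n / ellu u n :=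
  if_pos ⟨hn, Int.isCoprime_iff_gcd_eq_one.mp hna⟩

theorem one_lt_and_isCoprime_of_momentTerm_ne_zero {a₂ : ℤ} {u : ℕ → ℤ} {lam n : ℕ}
    (hlam : 0 < lam) (h : momentTerm a₂ u lam n ≠ 0) :
    1 < n ∧ IsCoprime (n : ℤ) a₂ ∧ n.primeFactors.card ≤ lam := by
  obtain ⟨hn, hna⟩ : 0 < n ∧ Int.gcd (n : ℤ) a₂ = 1 := by
    by_contra hn
    exact h (if_neg hn)
  have hcop := Int.isCoprime_iff_gcd_eq_one.mpr hna
  rw [momentTerm_of_isCoprime u lam hn hcop] at h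
  have hrho : rho lam n ≠ 0 := (div_ne_zero_iff.mp h).1
  refine ⟨?_, hcop, not_lt.mp fun hlt ↦ hrho (rho_eq_zero_of_lt_card_primeFactors hlt)⟩
  refine lt_of_le_of_ne hn ?_
  rintro rfl
  exact hrho (rho_one hlam)

namespace IsLucasSeq_s18

variable {a₁ a₂ : ℤ} {u : ℕ → ℤ}

theorem ellu_pos (hu : IsLucasSeq_s18 a₁ a₂ u) {n : ℕ} (hn : n ≠ 0) (hna : IsCoprime (n : ℤ) a₂) :
    0 < ellu u n :=
  Nat.lcm_pos (Nat.pos_of_ne_zero hn) (hu.zu_pos hn hna)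

/-- Take `p` to be the largest prime factor of `n` and `d = gcd(n / p, zu u p)`; then
`gcd(n, zu u p)` divides `d * gcd(p, zu u p)`, hence `d * Δ`. -/
theorem exists_factorization_le_ellu (hu : IsLucasSeq_s18 a₁ a₂ u) (hΔ : a₁ ^ 2 + 4 * a₂ ≠ 0) {n : ℕ}
    (hn : 1 < n) (hna : IsCoprime (n : ℤ) a₂) :
    ∃ (p : CoprimePrimes a₂) (d m : ℕ), d ∈ (zu u p).divisors ∧ p * d * m = n ∧
      (∀ q ∈ n.primeFactors, q ≤ p) ∧
      zu u p * p * m ≤ (a₁ ^ 2 + 4 * a₂).natAbs * ellu u n := by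
  obtain ⟨p, hpn, hmax⟩ :=
    n.primeFactors.exists_max_image id (Nat.nonempty_primeFactors.mpr hn)
  obtain ⟨hp, ⟨k, rfl⟩, hn₀⟩ := Nat.mem_primeFactors.mp hpn
  have hpa : IsCoprime (p : ℤ) a₂ :=
    hna.of_isCoprime_of_dvd_left (Int.natCast_dvd_natCast.mpr (dvd_mul_right p k))
  set z := zu u p
  have hz₀ : 0 < z := hu.zu_pos hp.ne_zero hpa
  have hd₀ : 0 < k.gcd z := Nat.gcd_pos_of_pos_right k hz₀
  obtain ⟨m, hm⟩ := Nat.gcd_dvd_left k z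
  have hgcd : (p * k).gcd z ≤ (a₁ ^ 2 + 4 * a₂).natAbs * k.gcd z :=
    Nat.le_of_dvd (Nat.mul_pos (Int.natAbs_pos.mpr hΔ) hd₀) <|
      (Nat.gcd_mul_left_dvd_mul_gcd z p k).trans
        (mul_dvd_mul_right (hu.gcd_zu_dvd_discr hp hpa) _)
  have hlcm : (p * k).lcm z ≤ ellu u (p * k) :=
    Nat.le_of_dvd (hu.ellu_pos hn₀ hna) <|
      lcm_dvd_lcm dvd_rfl (hu.zu_dvd_zu hn₀ hna (dvd_mul_right p k))
  have hmul : k.gcd z * (z * p * m) ≤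
      k.gcd z * ((a₁ ^ 2 + 4 * a₂).natAbs * ellu u (p * k)) :=
    calc k.gcd z * (z * p * m) = (p * k).gcd z * (p * k).lcm z := by
          rw [Nat.gcd_mul_lcm]
          nth_rw 2 [hm]
          ring
      _ ≤ (a₁ ^ 2 + 4 * a₂).natAbs * k.gcd z * ellu u (p * k) := Nat.mul_le_mul hgcd hlcm
      _ = k.gcd z * ((a₁ ^ 2 + 4 * a₂).natAbs * ellu u (p * k)) := by ring
  refine ⟨⟨p, hp, hpa⟩, k.gcd z, m, Nat.mem_divisors.mpr ⟨Nat.gcd_dvd_right k z, hz₀.ne'⟩,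
    by rw [mul_assoc, ← hm], hmax, Nat.le_of_mul_le_mul_left hmul hd₀⟩

end IsLucasSeq_s18

/-- Multiply the bound for `x` by `a ≤ p ^ k` twice to gain a negative power of `a`. -/
theorem rpow_le_of_le_two_mul_sq {δ x p a b : ℝ} {k : ℕ} (hδ : δ = 1 / (24 * (k + 1)))
    (hx : 0 ≤ x) (hp : 0 < p) (ha : 0 < a) (hb : 0 < b) (hxle : x ≤ 2 * p ^ 2 * (a * b ^ 2))
    (hap : a ≤ p ^ k) :
    x ^ δ ≤ 2 * p ^ (1 / 12 : ℝ) * (a ^ (-δ) * b ^ (2 * δ)) := by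
  have hδ₁ : δ ≤ 1 := by
    rw [hδ, div_le_one (by positivity)]
    linarith [(Nat.cast_nonneg k : (0 : ℝ) ≤ k)]
  have hexp : ((2 * (k + 1) : ℕ) : ℝ) * δ = 1 / 12 := by
    rw [hδ]
    push_cast
    field_simp
    norm_num
  have hxle' : x ≤ 2 * p ^ (2 * (k + 1)) * (a⁻¹ * b ^ 2) := by
    calc x ≤ 2 * p ^ 2 * (a * b ^ 2) := hxle
      _ = 2 * p ^ 2 * (a * a) * (a⁻¹ * b ^ 2) := by field_simp
      _ ≤ 2 * p ^ 2 * (p ^ k * p ^ k) * (a⁻¹ * b ^ 2) := by gcongr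
      _ = 2 * p ^ (2 * (k + 1)) * (a⁻¹ * b ^ 2) := by ring
  calc x ^ δ ≤ (2 * p ^ (2 * (k + 1)) * (a⁻¹ * b ^ 2)) ^ δ :=
      Real.rpow_le_rpow hx hxle' (by rw [hδ]; positivity)
    _ = 2 ^ δ * p ^ (1 / 12 : ℝ) * (a ^ (-δ) * b ^ (2 * δ)) := by
      rw [Real.mul_rpow (by positivity) (by positivity), Real.mul_rpow (by positivity)
        (by positivity), Real.mul_rpow (by positivity) (by positivity), ← Real.rpow_natCast p,
        ← Real.rpow_mul hp.le, hexp, Real.inv_rpow ha.le, ← Real.rpow_neg ha.le,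
        ← Real.rpow_natCast b, ← Real.rpow_mul hb.le, Nat.cast_two]
    _ ≤ 2 * p ^ (1 / 12 : ℝ) * (a ^ (-δ) * b ^ (2 * δ)) := by
      gcongr
      exact Real.rpow_le_self_of_one_le one_le_two hδ₁

theorem rpow_mul_rpow_le_add {x z : ℝ} (hx : 0 < x) (hz : 0 < z) :
    x ^ (-(11 / 12) : ℝ) * z ^ (-(1 / 2) : ℝ) ≤ x ^ (-(11 / 10) : ℝ) + 1 / z ^ 3 := by
  have hyoung := Real.geom_mean_le_arith_mean2_weighted (w₁ := 5 / 6) (w₂ := 1 / 6)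
    (by norm_num) (by norm_num) (Real.rpow_nonneg hx.le (-(11 / 10)))
    (Real.rpow_nonneg hz.le (-3)) (by norm_num)
  rw [← Real.rpow_mul hx.le, ← Real.rpow_mul hz.le, Real.rpow_neg hz.le 3,
    show (3 : ℝ) = (3 : ℕ) by norm_num, Real.rpow_natCast] at hyoung
  norm_num1 at hyoung
  have : 0 < x ^ (-(11 / 10) : ℝ) := by positivity
  have : 0 < (z ^ 3)⁻¹ := by positivity
  rw [one_div (z ^ 3)]
  linarith

namespace IsLucasSeq_s18

variable {a₁ a₂ : ℤ} {u : ℕ → ℤ}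

theorem exists_mul_sq_factorization_le_ellu (hu : IsLucasSeq_s18 a₁ a₂ u) (hΔ : a₁ ^ 2 + 4 * a₂ ≠ 0)
    {n k : ℕ} (hn : 1 < n) (hna : IsCoprime (n : ℤ) a₂) (hcard : n.primeFactors.card ≤ k) :
    ∃ (p : CoprimePrimes a₂) (d a b : ℕ), d ∈ (zu u p).divisors ∧ p * d * (a * b ^ 2) = n ∧
      a ≤ (p : ℕ) ^ k ∧ n ≤ 2 * (p : ℕ) ^ 2 * (a * b ^ 2) ∧
      zu u p * p * (a * b ^ 2) ≤ (a₁ ^ 2 + 4 * a₂).natAbs * ellu u n := by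
  obtain ⟨p, d, m, hd, rfl, hmax, hell⟩ := hu.exists_factorization_le_ellu hΔ hn hna
  have hn₀ : p * d * m ≠ 0 := by omega
  have hsub : m.primeFactors ⊆ (p * d * m).primeFactors :=
    Nat.primeFactors_mono (dvd_mul_left _ _) hn₀
  obtain ⟨a, b, rfl, hap⟩ := exists_mul_sq_eq_of_primeFactors_le (right_ne_zero_of_mul hn₀)
    p.2.1.pos (fun q hq ↦ hmax q (hsub hq)) ((Finset.card_le_card hsub).trans hcard)
  refine ⟨p, d, a, b, hd, rfl, hap, ?_, hell⟩
  have hdp : d ≤ 2 * p := by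
    have := (Nat.divisor_le hd).trans (hu.zu_le_succ p.2.1 p.2.2)
    have := p.2.1.one_lt
    omega
  calc p * d * (a * b ^ 2) ≤ p * (2 * p) * (a * b ^ 2) := by gcongr
    _ = 2 * (p : ℕ) ^ 2 * (a * b ^ 2) := by ring

theorem exists_momentTerm_le (hu : IsLucasSeq_s18 a₁ a₂ u) (hΔ : a₁ ^ 2 + 4 * a₂ ≠ 0) {lam : ℕ}
    (hlam : 0 < lam) {δ : ℝ} (hδ : δ = 1 / (24 * (lam + 1))) {n : ℕ}
    (hn : momentTerm a₂ u lam n ≠ 0) :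
    ∃ (p : CoprimePrimes a₂) (d a b : ℕ), d ∈ (zu u p).divisors ∧ p * d * (a * b ^ 2) = n ∧
      momentTerm a₂ u lam n ≤ lam.factorial / δ ^ lam * (a₁ ^ 2 + 4 * a₂).natAbs * 2 *
        (((p : ℕ) : ℝ) ^ (-(11 / 12) : ℝ) / zu u p *
          ((a : ℝ) ^ (-1 - δ) * (b : ℝ) ^ (2 * δ - 2))) := by
  have hδ₀ : 0 < δ := by rw [hδ]; positivity
  obtain ⟨hn₁, hna, hcard⟩ := one_lt_and_isCoprime_of_momentTerm_ne_zero hlam hn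
  rw [momentTerm_of_isCoprime u lam (by omega) hna]
  obtain ⟨p, d, a, b, hd, hfac, hap, hnle, hell⟩ :=
    hu.exists_mul_sq_factorization_le_ellu hΔ hn₁ hna hcard
  refine ⟨p, d, a, b, hd, hfac, ?_⟩
  have hab : a * b ^ 2 ≠ 0 := right_ne_zero_of_mul (hfac.trans_ne (by omega))
  have hp₀ : (0 : ℝ) < (p : ℕ) := Nat.cast_pos.mpr p.2.1.pos
  have ha₀ : (0 : ℝ) < a := Nat.cast_pos.mpr (Nat.pos_of_ne_zero (left_ne_zero_of_mul hab))
  have hb₀ : (0 : ℝ) < b := Nat.cast_pos.mpr <|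
    Nat.pos_of_ne_zero (ne_zero_pow two_ne_zero (right_ne_zero_of_mul hab))
  have hz₀ : (0 : ℝ) < zu u p := Nat.cast_pos.mpr (hu.zu_pos p.2.1.ne_zero p.2.2)
  have hell₀ : (0 : ℝ) < ellu u n := Nat.cast_pos.mpr (hu.ellu_pos (by omega) hna)
  have hrho : rho lam n ≤ lam.factorial / δ ^ lam *
      (2 * ((p : ℕ) : ℝ) ^ (1 / 12 : ℝ) * ((a : ℝ) ^ (-δ) * (b : ℝ) ^ (2 * δ))) := by
    refine (rho_le_log_pow _ _).trans <|
      (log_pow_le_mul_rpow hδ₀ (Nat.one_le_cast.mpr hn₁.le) lam).trans ?_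
    gcongr
    exact rpow_le_of_le_two_mul_sq hδ (by positivity) hp₀ ha₀ hb₀ (by exact_mod_cast hnle)
      (by exact_mod_cast hap)
  have hellinv : (ellu u n : ℝ)⁻¹ ≤
      (a₁ ^ 2 + 4 * a₂).natAbs / (zu u p * (p : ℕ) * (a * b ^ 2)) := by
    rw [inv_le_iff_one_le_mul₀ hell₀, div_mul_eq_mul_div, one_le_div (by positivity)]
    exact_mod_cast hell
  rw [div_eq_mul_inv]
  refine (mul_le_mul hrho hellinv (by positivity) (by positivity)).trans_eq ?_
  rw [show (-(11 / 12) : ℝ) = 1 / 12 - 1 by norm_num, show -1 - δ = -δ - 1 by ring,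
    Real.rpow_sub_one hp₀.ne', Real.rpow_sub_one ha₀.ne', Real.rpow_sub hb₀, Real.rpow_two]
  ring

theorem summable_rpow_div_zu_divisors (hu : IsLucasSeq_s18 a₁ a₂ u) (hne : ∀ k, 0 < k → u k ≠ 0) :
    Summable fun x : Σ p : CoprimePrimes a₂, (zu u p).divisors ↦
      ((x.1 : ℕ) : ℝ) ^ (-(11 / 12) : ℝ) / zu u x.1 := by
  obtain ⟨C, hC⟩ := hu.exists_card_zu_fiber_le hne
  have hsum : Summable fun p : CoprimePrimes a₂ ↦
      ((p : ℕ) : ℝ) ^ (-(11 / 10) : ℝ) + 1 / (zu u p : ℝ) ^ 3 :=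
    ((Real.summable_nat_rpow.mpr (by norm_num)).comp_injective Subtype.val_injective).add
      (summable_one_div_pow_three_of_card_fiber_le hC)
  refine (summable_sigma_of_nonneg fun x ↦ by positivity).mpr
    ⟨fun p ↦ Summable.of_finite, (hsum.mul_left 2).of_nonneg_of_le
      (fun p ↦ tsum_nonneg fun _ ↦ by positivity) fun p ↦ ?_⟩
  have hp₀ : (0 : ℝ) < (p : ℕ) := Nat.cast_pos.mpr p.2.1.pos
  have hz₀ : (0 : ℝ) < zu u p := Nat.cast_pos.mpr (hu.zu_pos p.2.1.ne_zero p.2.2)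
  have hcard : ((zu u p).divisors.card : ℝ) ≤ 2 * √(zu u p) :=
    calc ((zu u p).divisors.card : ℝ) ≤ 2 * (zu u p).sqrt := by
          exact_mod_cast card_divisors_le_two_mul_sqrt _
      _ ≤ 2 * √(zu u p) := by gcongr; exact Real.nat_sqrt_le_real_sqrt
  calc ∑' _ : (zu u p).divisors, ((p : ℕ) : ℝ) ^ (-(11 / 12) : ℝ) / zu u p
      = (zu u p).divisors.card * (((p : ℕ) : ℝ) ^ (-(11 / 12) : ℝ) / zu u p) := by
        rw [tsum_const, Nat.card_eq_fintype_card, Fintype.card_coe, nsmul_eq_mul]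
    _ ≤ 2 * √(zu u p) * (((p : ℕ) : ℝ) ^ (-(11 / 12) : ℝ) / zu u p) := by gcongr
    _ = 2 * (((p : ℕ) : ℝ) ^ (-(11 / 12) : ℝ) * (zu u p : ℝ) ^ (-(1 / 2) : ℝ)) := by
        rw [Real.rpow_neg hz₀.le, ← Real.sqrt_eq_rpow]
        field_simp
        rw [Real.sq_sqrt hz₀.le]
    _ ≤ 2 * (((p : ℕ) : ℝ) ^ (-(11 / 10) : ℝ) + 1 / (zu u p : ℝ) ^ 3) := by
        gcongr
        exact rpow_mul_rpow_le_add hp₀ hz₀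

theorem summable_momentTerm (hu : IsLucasSeq_s18 a₁ a₂ u) (hΔ : a₁ ^ 2 + 4 * a₂ ≠ 0)
    (hne : ∀ k, 0 < k → u k ≠ 0) {lam : ℕ} (hlam : 0 < lam) : Summable (momentTerm a₂ u lam) := by
  obtain ⟨δ, hδ⟩ : ∃ δ : ℝ, δ = 1 / (24 * (lam + 1)) := ⟨_, rfl⟩
  have hδ₀ : 0 < δ := by rw [hδ]; positivity
  have hδ₁ : δ ≤ 1 / 24 := by
    rw [hδ]
    gcongr
    linarith [(Nat.cast_nonneg lam : (0 : ℝ) ≤ lam)]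
  have ha : Summable fun a : ℕ ↦ (a : ℝ) ^ (-1 - δ) :=
    Real.summable_nat_rpow.mpr (by linarith)
  have hb : Summable fun b : ℕ ↦ (b : ℝ) ^ (2 * δ - 2) :=
    Real.summable_nat_rpow.mpr (by linarith)
  have hab := ha.mul_of_nonneg hb (fun a ↦ by positivity) fun b ↦ by positivity
  have hmajorant := ((hu.summable_rpow_div_zu_divisors hne).mul_of_nonneg hab
    (fun x ↦ by positivity) fun x ↦ by positivity).mul_left
      (lam.factorial / δ ^ lam * (a₁ ^ 2 + 4 * a₂).natAbs * 2)
  refine summable_of_forall_exists_le (momentTerm_nonneg a₂ u lam) hmajorant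
    (fun x ↦ x.1.1 * x.1.2 * (x.2.1 * x.2.2 ^ 2)) fun n hn ↦ ?_
  obtain ⟨p, d, a, b, hd, hfac, hle⟩ := hu.exists_momentTerm_le hΔ hlam hδ hn
  exact ⟨(⟨p, d, hd⟩, a, b), hfac, hle⟩

end IsLucasSeq_s18
/-! ### Logarithmic moments of the primes -/

theorem tendsto_iteratedDeriv_div_factorial {U : Set ℂ} (hU : IsOpen U) {f : ℂ → ℂ} {c : ℂ}
    (hf : DifferentiableOn ℂ f U) (hc : Metric.closedBall c 1 ⊆ U) :
    Filter.Tendsto (fun k : ℕ ↦ iteratedDeriv k f c / k.factorial) Filter.atTop (nhds 0) := by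
  obtain ⟨r, hr, hrU⟩ :=
    (isCompact_closedBall c 1).exists_cthickening_subset_open hU hc
  rw [cthickening_closedBall hr.le zero_le_one] at hrU
  have hR : 0 < r + 1 := by linarith
  have hcont : ContinuousOn f (Metric.sphere c (r + 1)) :=
    hf.continuousOn.mono (Metric.sphere_subset_closedBall.trans hrU)
  obtain ⟨C, hC⟩ := (isCompact_sphere c (r + 1)).exists_bound_of_continuousOn hcont
  have hdiff : DiffContOnCl ℂ f (Metric.ball c (r + 1)) :=
    (hf.mono (Metric.closure_ball_subset_closedBall.trans hrU)).diffContOnCl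
  refine squeeze_zero_norm (a := fun k ↦ C * ((r + 1)⁻¹) ^ k) (fun k ↦ ?_) ?_
  · have hle := Complex.norm_iteratedDeriv_le_of_forall_mem_sphere_norm_le k hR hdiff hC
    rw [norm_div, Complex.norm_natCast, div_le_iff₀ (by positivity)]
    calc ‖iteratedDeriv k f c‖ ≤ k.factorial * C / (r + 1) ^ k := hle
      _ = C * (r + 1)⁻¹ ^ k * k.factorial := by rw [inv_pow]; ring
  · have := (tendsto_pow_atTop_nhds_zero_of_lt_one (by positivity)
      (inv_lt_one_of_one_lt₀ (by linarith : 1 < r + 1))).const_mul C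
    rwa [mul_zero] at this

theorem log_pow_div_factorial_le {x : ℝ} (hx : 1 ≤ x) (k : ℕ) :
    Real.log x ^ k / k.factorial ≤ x :=
  (Real.pow_div_factorial_le_exp _ (Real.log_nonneg hx) k).trans_eq
    (Real.exp_log (by linarith))

theorem tendsto_tsum_mul_log_pow_div_sq_div_factorial {c : ℕ → ℝ}
    (hc : Summable fun n ↦ c n / n) :
    Filter.Tendsto (fun k : ℕ ↦ (∑' n : ℕ, c n * Real.log n ^ k / (n : ℝ) ^ 2) / k.factorial)
      Filter.atTop (nhds 0) := by
  have hlim := tendsto_tsum_of_dominated_convergence (𝓕 := Filter.atTop)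
    (f := fun (k : ℕ) (n : ℕ) ↦ c n / (n : ℝ) ^ 2 * (Real.log n ^ k / k.factorial))
    (g := fun _ ↦ 0) hc.abs (fun n ↦ ?_) (Filter.Eventually.of_forall fun k n ↦ ?_)
  · rw [tsum_zero] at hlim
    refine hlim.congr fun k ↦ ?_
    rw [← tsum_div_const]
    exact tsum_congr fun n ↦ by ring
  · simpa using (FloorSemiring.tendsto_pow_div_factorial_atTop (Real.log n)).const_mul
      (c n / (n : ℝ) ^ 2)
  · rcases Nat.eq_zero_or_pos n with rfl | hn
    · simp
    have hn₁ : (1 : ℝ) ≤ n := Nat.one_le_cast.mpr hn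
    have hlog : 0 ≤ Real.log n ^ k / k.factorial :=
      div_nonneg (pow_nonneg (Real.log_nonneg hn₁) k) (Nat.cast_nonneg _)
    calc ‖c n / (n : ℝ) ^ 2 * (Real.log n ^ k / k.factorial)‖
        = |c n| / (n : ℝ) ^ 2 * (Real.log n ^ k / k.factorial) := by
          rw [Real.norm_eq_abs, abs_mul, abs_of_nonneg hlog, abs_div, abs_pow, Nat.abs_cast]
      _ ≤ |c n| / (n : ℝ) ^ 2 * n := by
          gcongr
          exact log_pow_div_factorial_le hn₁ k
      _ = |c n / n| := by
          rw [abs_div, Nat.abs_cast]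
          field_simp

/-- `G(s) = (s - 1) ζ(s)` is entire and has no zero on `re s ≥ 1`, so its logarithmic
derivative is the correction term `-E`. -/
theorem exists_LSeries_vonMangoldt_eq_inv_add :
    ∃ (U : Set ℂ) (E : ℂ → ℂ), IsOpen U ∧ Metric.closedBall 2 1 ⊆ U ∧ DifferentiableOn ℂ E U ∧
      ∀ s : ℂ, 1 < s.re →
        LSeries (fun n ↦ ArithmeticFunction.vonMangoldt n) s = (s - 1)⁻¹ + E s := by
  set G := DirichletCharacter.LFunctionTrivChar₁ 1
  have hG : Differentiable ℂ G := DirichletCharacter.differentiable_LFunctionTrivChar₁ 1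
  have hzeta : DirichletCharacter.LFunctionTrivChar 1 = riemannZeta :=
    DirichletCharacter.LFunction_modOne_eq
  have hG_eq {s : ℂ} (hs : s ≠ 1) : G s = (s - 1) * riemannZeta s := by
    rw [← hzeta]
    exact Function.update_of_ne hs _ _
  have hG_deriv {s : ℂ} (hs : s ≠ 1) :
      deriv G s = (s - 1) * deriv riemannZeta s + riemannZeta s := by
    rw [DirichletCharacter.deriv_LFunctionTrivChar₁_apply_of_ne_one 1 hs, hzeta]
  refine ⟨{s | G s ≠ 0}, fun s ↦ -deriv G s / G s, isOpen_ne_fun hG.continuous continuous_const,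
    fun s hs ↦ ?_, ?_, fun s hs ↦ ?_⟩
  · rcases eq_or_ne s 1 with rfl | hs₁
    · exact DirichletCharacter.LFunctionTrivChar₁_apply_one_ne_zero 1
    have hre : 1 ≤ s.re := by
      have hdist := (Complex.abs_re_le_norm (s - 2)).trans (mem_closedBall_iff_norm.mp hs)
      rw [Complex.sub_re, Complex.re_ofNat, abs_le] at hdist
      linarith
    change G s ≠ 0
    rw [hG_eq hs₁]
    exact mul_ne_zero (sub_ne_zero.mpr hs₁) (riemannZeta_ne_zero_of_one_le_re hre)
  · exact (hG.differentiableOn.deriv isOpen_univ |>.mono (Set.subset_univ _)).neg.div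
      hG.differentiableOn fun s hs ↦ hs
  · have hs₁ : s ≠ 1 := by
      rintro rfl
      simp at hs
    have hzeta₀ := riemannZeta_ne_zero_of_one_le_re hs.le
    have hs₁' := sub_ne_zero.mpr hs₁
    change _ = (s - 1)⁻¹ + -deriv G s / G s
    rw [ArithmeticFunction.LSeries_vonMangoldt_eq_deriv_riemannZeta_div hs, hG_eq hs₁,
      hG_deriv hs₁]
    field_simp
    ring

theorem iteratedDeriv_inv_sub_one_at_two (k : ℕ) :
    iteratedDeriv k (fun s : ℂ ↦ (s - 1)⁻¹) 2 = (-1) ^ k * k.factorial := by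
  have h := congrFun (iter_deriv_inv_linear_sub k (1 : ℂ) 1) 2
  rw [iteratedDeriv_eq_iterate]
  simpa [show (2 : ℂ) - 1 = 1 by norm_num] using h

theorem LSeries_iterate_logMul_ofReal (c : ℕ → ℝ) (k : ℕ) :
    LSeries (LSeries.logMul^[k] fun n : ℕ ↦ (c n : ℂ)) 2 =
      ((∑' n : ℕ, c n * Real.log n ^ k / (n : ℝ) ^ 2 : ℝ) : ℂ) := by
  have hiter : LSeries.logMul^[k] (fun n : ℕ ↦ (c n : ℂ)) =
      fun n : ℕ ↦ ((Real.log n ^ k * c n : ℝ) : ℂ) := by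
    induction k with
    | zero => simp
    | succ k ih =>
      funext n
      rw [Function.iterate_succ_apply', ih, LSeries.logMul, ← Complex.natCast_log]
      push_cast
      ring
  rw [LSeries, Complex.ofReal_tsum, hiter]
  refine tsum_congr fun n ↦ ?_
  rcases eq_or_ne n 0 with rfl | hn
  · simp
  rw [LSeries.term_of_ne_zero hn, Complex.cpow_ofNat]
  push_cast
  ring

theorem tsum_vonMangoldt_mul_log_pow_div_sq_eq {E : ℂ → ℂ} (hE : AnalyticAt ℂ E 2)
    (hL : LSeries (fun n ↦ (ArithmeticFunction.vonMangoldt n : ℂ)) =ᶠ[nhds 2]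
      fun s ↦ (s - 1)⁻¹ + E s) (k : ℕ) :
    ((∑' n : ℕ, ArithmeticFunction.vonMangoldt n * Real.log n ^ k / (n : ℝ) ^ 2 : ℝ) : ℂ) =
      k.factorial + (-1) ^ k * iteratedDeriv k E 2 := by
  have habs : LSeries.abscissaOfAbsConv (fun n ↦ (ArithmeticFunction.vonMangoldt n : ℂ)) <
      ((2 : ℂ).re : EReal) := by
    have hle := (ArithmeticFunction.LSeriesSummable_vonMangoldt
      (s := (3 / 2 : ℝ)) (by norm_num)).abscissaOfAbsConv_le
    refine hle.trans_lt (EReal.coe_lt_coe_iff.mpr ?_)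
    norm_num
  have hinv : ContDiffAt ℂ k (fun s : ℂ ↦ (s - 1)⁻¹) 2 :=
    (contDiffAt_id.sub contDiffAt_const).inv (by norm_num)
  have hderiv := hL.iteratedDeriv_eq k
  rw [LSeries_iteratedDeriv k habs, LSeries_iterate_logMul_ofReal,
    iteratedDeriv_fun_add hinv hE.contDiffAt, iteratedDeriv_inv_sub_one_at_two] at hderiv
  have hsq : (-1 : ℂ) ^ k * (-1) ^ k = 1 := by rw [← mul_pow]; norm_num
  set M := ((∑' n : ℕ, ArithmeticFunction.vonMangoldt n * Real.log n ^ k / (n : ℝ) ^ 2 : ℝ) : ℂ)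
  linear_combination (-1) ^ k * hderiv + (k.factorial - M) * hsq

theorem tendsto_tsum_vonMangoldt_mul_log_pow_div_sq_div_factorial :
    Filter.Tendsto (fun k : ℕ ↦ (∑' n : ℕ, ArithmeticFunction.vonMangoldt n * Real.log n ^ k /
      (n : ℝ) ^ 2) / k.factorial) Filter.atTop (nhds 1) := by
  obtain ⟨U, E, hU, hball, hE, hL⟩ := exists_LSeries_vonMangoldt_eq_inv_add
  have hE₂ : AnalyticAt ℂ E 2 :=
    hE.analyticAt (hU.mem_nhds (hball (Metric.mem_closedBall_self zero_le_one)))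
  have hL₂ : LSeries (fun n ↦ (ArithmeticFunction.vonMangoldt n : ℂ)) =ᶠ[nhds 2]
      fun s ↦ (s - 1)⁻¹ + E s := by
    filter_upwards [(isOpen_lt continuous_const Complex.continuous_re).mem_nhds
      (show (1 : ℝ) < (2 : ℂ).re by norm_num)] with s hs using hL s hs
  have hsign : Filter.Tendsto (fun k : ℕ ↦ (-1) ^ k * (iteratedDeriv k E 2 / k.factorial))
      Filter.atTop (nhds 0) :=
    squeeze_zero_norm (fun k ↦ by simp)
      (tendsto_zero_iff_norm_tendsto_zero.mp (tendsto_iteratedDeriv_div_factorial hU hE hball))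
  rw [← Filter.tendsto_ofReal_iff, Complex.ofReal_one]
  refine (by simpa using hsign.const_add 1 : Filter.Tendsto
    (fun k : ℕ ↦ 1 + (-1) ^ k * (iteratedDeriv k E 2 / k.factorial)) _ (nhds 1)).congr fun k ↦ ?_
  have hfact : (k.factorial : ℂ) ≠ 0 := Nat.cast_ne_zero.mpr k.factorial_ne_zero
  rw [Complex.ofReal_div, tsum_vonMangoldt_mul_log_pow_div_sq_eq hE₂ hL₂ k, Complex.ofReal_natCast]
  field_simp

theorem summable_log_pow_div_sq (k : ℕ) :
    Summable fun n : ℕ ↦ Real.log n ^ k / (n : ℝ) ^ 2 := by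
  have hsum : Summable fun n : ℕ ↦ k.factorial / (1 / 2 : ℝ) ^ k * (n : ℝ) ^ (-(3 / 2) : ℝ) :=
    (Real.summable_nat_rpow.mpr (by norm_num)).mul_left _
  refine hsum.of_nonneg_of_le (fun n ↦ ?_) fun n ↦ ?_
  · exact div_nonneg (pow_nonneg (Real.log_natCast_nonneg n) k) (sq_nonneg _)
  · rcases Nat.eq_zero_or_pos n with rfl | hn
    · simp [Real.zero_rpow]
    have hn₁ : (1 : ℝ) ≤ n := Nat.one_le_cast.mpr hn
    rw [div_le_iff₀ (by positivity), mul_assoc, ← Real.rpow_natCast (n : ℝ) 2,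
      ← Real.rpow_add (by positivity)]
    norm_num only [Nat.cast_ofNat]
    exact log_pow_le_mul_rpow one_half_pos hn₁ k

theorem summable_vonMangoldt_mul_log_pow_div_sq (k : ℕ) :
    Summable fun n : ℕ ↦ ArithmeticFunction.vonMangoldt n * Real.log n ^ k / (n : ℝ) ^ 2 := by
  refine (summable_log_pow_div_sq (k + 1)).of_nonneg_of_le (fun n ↦ ?_) fun n ↦ ?_
  · exact div_nonneg (mul_nonneg ArithmeticFunction.vonMangoldt_nonneg
      (pow_nonneg (Real.log_natCast_nonneg n) k)) (sq_nonneg _)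
  · have hlog := pow_nonneg (Real.log_natCast_nonneg n) k
    have hΛ : ArithmeticFunction.vonMangoldt n ≤ Real.log n :=
      ArithmeticFunction.vonMangoldt_le_log
    rw [pow_succ' _ k]
    exact div_le_div_of_nonneg_right (mul_le_mul_of_nonneg_right hΛ hlog) (sq_nonneg _)

theorem summable_prime_log_pow_div (A k : ℕ) :
    Summable fun n : ℕ ↦
      if n.Prime ∧ A < n then Real.log n ^ k / ((n : ℝ) * (n + 1)) else 0 := by
  refine (summable_log_pow_div_sq k).of_nonneg_of_le (fun n ↦ ?_) fun n ↦ ?_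
  · have := pow_nonneg (Real.log_natCast_nonneg n) k
    split_ifs <;> positivity
  · have := pow_nonneg (Real.log_natCast_nonneg n) k
    split_ifs with h
    · have hn : (0 : ℝ) < n := Nat.cast_pos.mpr h.1.pos
      gcongr
      nlinarith
    · positivity

theorem summable_vonMangoldt_sub_prime_div (A : ℕ) :
    Summable fun n : ℕ ↦ (ArithmeticFunction.vonMangoldt n -
      if n.Prime ∧ A < n then Real.log n * n / (n + 1) else 0) / n := by
  have hnonprime : Summable fun n : ℕ ↦
      (if n.Prime then 0 else ArithmeticFunction.vonMangoldt n) / n := by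
    refine (ArithmeticFunction.vonMangoldt.summable_residueClass_non_primes_div
      (0 : ZMod 1)).congr fun n ↦ ?_
    simp [ArithmeticFunction.vonMangoldt.residueClass, Subsingleton.elim (n : ZMod 1) 0]
  have hsmall : Summable fun n : ℕ ↦ if n.Prime ∧ n ≤ A then Real.log n / n else 0 :=
    summable_of_ne_finset_zero (s := Finset.Iic A) fun n hn ↦
      if_neg fun h ↦ hn (Finset.mem_Iic.mpr h.2)
  refine ((hnonprime.add hsmall).add (summable_prime_log_pow_div A 1)).congr fun n ↦ ?_
  by_cases hp : n.Prime
  · have hn : (n : ℝ) ≠ 0 := Nat.cast_ne_zero.mpr hp.ne_zero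
    have hn₁ : (n : ℝ) + 1 ≠ 0 := Nat.cast_add_one_ne_zero n
    rcases le_or_gt n A with hA | hA
    · simp [hp, hA, hA.not_gt, ArithmeticFunction.vonMangoldt_apply_prime hp]
    · simp only [hp, hA, hA.not_ge, ArithmeticFunction.vonMangoldt_apply_prime hp, if_true,
        and_true, and_false, if_false]
      field_simp
      ring
  · simp [hp]

theorem tendsto_tsum_prime_log_pow_div_div_factorial (A : ℕ) :
    Filter.Tendsto (fun k : ℕ ↦ (∑' n : ℕ, if n.Prime ∧ A < n then
      Real.log n ^ (k + 1) / ((n : ℝ) * (n + 1)) else 0) / k.factorial)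
      Filter.atTop (nhds 1) := by
  have hlim := tendsto_tsum_vonMangoldt_mul_log_pow_div_sq_div_factorial.sub
    (tendsto_tsum_mul_log_pow_div_sq_div_factorial (summable_vonMangoldt_sub_prime_div A))
  rw [sub_zero] at hlim
  refine hlim.congr fun k ↦ ?_
  have hweight (n : ℕ) : (ArithmeticFunction.vonMangoldt n -
      if n.Prime ∧ A < n then Real.log n * n / (n + 1) else 0) * Real.log n ^ k / (n : ℝ) ^ 2 =
        ArithmeticFunction.vonMangoldt n * Real.log n ^ k / (n : ℝ) ^ 2 -
          if n.Prime ∧ A < n then Real.log n ^ (k + 1) / ((n : ℝ) * (n + 1)) else 0 := by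
    split_ifs with h
    · have hn : (n : ℝ) ≠ 0 := Nat.cast_ne_zero.mpr h.1.ne_zero
      field_simp
      ring
    · ring
  rw [← sub_div, tsum_congr hweight, (summable_vonMangoldt_mul_log_pow_div_sq k).tsum_sub
    (summable_prime_log_pow_div A (k + 1)), sub_sub_cancel]

/-! ### The lower bounds -/

theorem IsLucasSeq_s18.log_pow_div_le_momentTerm {a₁ a₂ : ℤ} {u : ℕ → ℤ} (hu : IsLucasSeq_s18 a₁ a₂ u)
    {lam p : ℕ} (hlam : 0 < lam) (hp : p.Prime) (hpa : IsCoprime (p : ℤ) a₂) :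
    Real.log p ^ lam / ((p : ℝ) * (p + 1)) ≤ momentTerm a₂ u lam p := by
  have hell : ellu u p ≤ p * (p + 1) :=
    (Nat.le_of_dvd (Nat.mul_pos hp.pos (hu.zu_pos hp.ne_zero hpa)) (Nat.lcm_dvd_mul _ _)).trans
      (Nat.mul_le_mul_left p (hu.zu_le_succ hp hpa))
  rw [momentTerm_of_isCoprime u lam hp.pos hpa, rho_prime hlam hp]
  have := Real.log_natCast_nonneg p
  gcongr
  · exact_mod_cast hu.ellu_pos hp.ne_zero hpa
  · exact_mod_cast hell

theorem isCoprime_of_prime_of_natAbs_lt {a : ℤ} {p : ℕ} (ha : a ≠ 0) (hp : p.Prime)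
    (hpa : a.natAbs < p) : IsCoprime (p : ℤ) a := by
  rw [Int.isCoprime_iff_nat_coprime, Int.natAbs_natCast]
  exact hp.coprime_iff_not_dvd.mpr (Nat.not_dvd_of_pos_of_lt (Int.natAbs_pos.mpr ha) hpa)

theorem IsLucasSeq_s18.tsum_prime_log_pow_le_tsum_momentTerm {a₁ a₂ : ℤ} {u : ℕ → ℤ}
    (hu : IsLucasSeq_s18 a₁ a₂ u) (ha₂ : a₂ ≠ 0) {lam : ℕ} (hlam : 0 < lam)
    (hsum : Summable (momentTerm a₂ u lam)) :
    (∑' p : ℕ, if p.Prime ∧ a₂.natAbs < p then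
      Real.log p ^ lam / ((p : ℝ) * (p + 1)) else 0) ≤ ∑' n, momentTerm a₂ u lam n := by
  refine (summable_prime_log_pow_div a₂.natAbs lam).tsum_le_tsum (fun p ↦ ?_) hsum
  split_ifs with h
  · exact hu.log_pow_div_le_momentTerm hlam h.1 (isCoprime_of_prime_of_natAbs_lt ha₂ h.1 h.2)
  · exact momentTerm_nonneg a₂ u lam p

theorem half_mul_tsum_prime_log_pow_div_sq_le (A lam : ℕ) :
    (1 / 2 : ℝ) * (∑' p : ℕ, if p.Prime ∧ A < p then Real.log p ^ lam / (p : ℝ) ^ 2 else 0) ≤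
      ∑' p : ℕ, if p.Prime ∧ A < p then Real.log p ^ lam / ((p : ℝ) * (p + 1)) else 0 := by
  have hle (p : ℕ) : (1 / 2 : ℝ) * (if p.Prime ∧ A < p then Real.log p ^ lam / (p : ℝ) ^ 2 else 0) ≤
      if p.Prime ∧ A < p then Real.log p ^ lam / ((p : ℝ) * (p + 1)) else 0 := by
    split_ifs with h
    · have hp : (1 : ℝ) ≤ p := Nat.one_le_cast.mpr h.1.one_le
      have hlog := Real.log_natCast_nonneg p
      rw [one_div_mul_eq_div, div_div]
      exact div_le_div_of_nonneg_left (pow_nonneg hlog lam) (by positivity) (by nlinarith)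
    · simp
  rw [← tsum_mul_left]
  refine Summable.tsum_le_tsum hle (.of_nonneg_of_le (fun p ↦ ?_) hle ?_)
    (summable_prime_log_pow_div A lam)
  · have := Real.log_natCast_nonneg p
    split_ifs <;> positivity
  · exact summable_prime_log_pow_div A lam

theorem tendsto_succ_mul_factorial_pred_div_factorial :
    Filter.Tendsto (fun k : ℕ ↦ ((k : ℝ) + 1) * (k - 1).factorial / k.factorial)
      Filter.atTop (nhds 1) := by
  rw [← Filter.tendsto_add_atTop_iff_nat 1]
  have hlim := (tendsto_one_div_add_atTop_nhds_zero_nat (𝕜 := ℝ)).const_add 1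
  rw [add_zero] at hlim
  refine hlim.congr fun m ↦ ?_
  rw [Nat.add_sub_cancel, Nat.factorial_succ]
  push_cast
  field_simp

theorem eventually_mul_factorial_pred_le_tsum_prime (A : ℕ) {c : ℝ} (hc : c < 1) :
    ∀ᶠ k : ℕ in Filter.atTop, c * ((k : ℝ) + 1) * (k - 1).factorial ≤
      ∑' p : ℕ, if p.Prime ∧ A < p then Real.log p ^ (k + 1) / ((p : ℝ) * (p + 1)) else 0 := by
  have hlim := tendsto_succ_mul_factorial_pred_div_factorial.const_mul c
  rw [mul_one] at hlim
  filter_upwards [hlim.eventually_lt (tendsto_tsum_prime_log_pow_div_div_factorial A) hc] with k hk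
  rw [← mul_div_assoc, ← mul_assoc] at hk
  exact ((div_lt_div_iff_of_pos_right (by positivity)).mp hk).le

theorem statement18_general {a₁ a₂ : ℤ} {u : ℕ → ℤ} (hu : IsLucasSeq_s18 a₁ a₂ u) (ha₂ : a₂ ≠ 0)
    (hΔ : a₁ ^ 2 + 4 * a₂ ≠ 0) (hne : ∀ k, 0 < k → u k ≠ 0) :
    (∀ lam, 0 < lam → Summable (momentTerm a₂ u lam)) ∧
    (∀ c : ℝ, c < 1 → ∃ lam₀ : ℕ, ∀ lam ≥ lam₀,
      c * lam * (lam - 2).factorial ≤ ∑' n, momentTerm a₂ u lam n) ∧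
    (∀ lam, 0 < lam → (1 / 2 : ℝ) * (∑' q : ℕ, if q.Prime ∧ a₂.natAbs < q then
      Real.log q ^ lam / (q : ℝ) ^ 2 else 0) ≤ ∑' n, momentTerm a₂ u lam n) := by
  have hsum (lam : ℕ) (hlam : 0 < lam) : Summable (momentTerm a₂ u lam) :=
    hu.summable_momentTerm hΔ hne hlam
  have hprime (lam : ℕ) (hlam : 0 < lam) :=
    hu.tsum_prime_log_pow_le_tsum_momentTerm ha₂ hlam (hsum lam hlam)
  refine ⟨hsum, fun c hc ↦ ?_, fun lam hlam ↦
    (half_mul_tsum_prime_log_pow_div_sq_le _ lam).trans (hprime lam hlam)⟩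
  obtain ⟨k₀, hk₀⟩ := Filter.eventually_atTop.mp
    (eventually_mul_factorial_pred_le_tsum_prime a₂.natAbs hc)
  refine ⟨k₀ + 1, fun lam hlam ↦ ?_⟩
  obtain ⟨k, rfl⟩ : ∃ k, lam = k + 1 := ⟨lam - 1, by omega⟩
  have hk := (hk₀ k (by omega)).trans (hprime _ k.succ_pos)
  rwa [← Nat.cast_succ] at hk

/-- For every `ε ∈ (0, 1/2)` there is `λ₀` such that for all `λ ≥ λ₀`,
`M_{u,λ} ≥ (1/2 − ε)·λ·(λ−2)!`; and for every positive integer `λ`,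
`M_{u,λ} ≥ (1/2)·Σ_{p prime, p > |a₂|} (log p)^λ/p²`. -/
theorem statement18 (a₁ a₂ : ℤ) (hcop : IsCoprime a₁ a₂) (ha₂ : a₂ ≠ 0)
    (hΔ : a₁ ^ 2 + 4 * a₂ ≠ 0)
    (u : ℕ → ℤ) (hu0 : u 0 = 0) (hu1 : u 1 = 1)
    (hrec : ∀ n : ℕ, u (n + 2) = a₁ * u (n + 1) + a₂ * u n)
    (hnd : ∀ α β : ℂ, α ^ 2 = (a₁ : ℂ) * α + (a₂ : ℂ) →
      β ^ 2 = (a₁ : ℂ) * β + (a₂ : ℂ) → α ≠ β → ∀ k : ℕ, 0 < k → (α / β) ^ k ≠ 1) :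
    (∀ ε : ℝ, 0 < ε → ε < 1 / 2 → ∃ lam₀ : ℕ, ∀ lam : ℕ, lam₀ ≤ lam →
      (1 / 2 - ε) * (lam : ℝ) * (Nat.factorial (lam - 2) : ℝ) ≤
        ∑' n : ℕ, if 0 < n ∧ Int.gcd (n : ℤ) a₂ = 1 then
          rho lam n / (ellu u n : ℝ) else 0) ∧
    (∀ lam : ℕ, 0 < lam →
      (1 / 2 : ℝ) * (∑' q : ℕ, if q.Prime ∧ a₂.natAbs < q then
          Real.log (q : ℝ) ^ lam / (q : ℝ) ^ 2 else 0) ≤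
        ∑' n : ℕ, if 0 < n ∧ Int.gcd (n : ℤ) a₂ = 1 then
          rho lam n / (ellu u n : ℝ) else 0) := by
  obtain ⟨-, hasymp, hprime⟩ := statement18_general ⟨hu0, hu1, hrec⟩ ha₂ hΔ
    (IsLucasSeq_s18.ne_zero_of_nondegenerate ⟨hu0, hu1, hrec⟩ ha₂ hΔ hnd)
  exact ⟨fun ε _ _ ↦ hasymp (1 / 2 - ε) (by linarith), hprime⟩
end
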